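/- arXiv:2103.15799 — 5 statements merged into one kernel-verified Lean document; each statement's English description precedes it below -/
import Mathlib

section
/- Let T be a complete first-order theory in a language L. Assume that for every model M of T, every formula φ(x;y) with parameters from M, where x and y are single variables, does not have the order property. Then T is stable, i.e., no L-formula φ(x̄;ȳ) (in any finite tuples of variables, without parameters) has the order property. -/
open FirstOrder FirstOrder.Language

universe u v

/-- An elementary extension of `M`: a structure together with an elementary embedding of `M`
into it. -/
structure ElemExt (L : FirstOrder.Language.{u, v}) (M : Type (max u v)) [L.Structure M] where
  carrier : Type (max u v)
  [str : L.Structure carrier]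
  emb : M ↪ₑ[L] carrier

attribute [instance] ElemExt.str

/-- A formula `φ(x̄; ȳ)` (without parameters) has the order property with respect to a theory
`T` if in some model of `T` there are sequences `(āᵢ : i < ω)` and `(b̄ⱼ : j < ω)` such that
`φ(āᵢ; b̄ⱼ)` holds iff `i < j`. -/
def FormulaHasOP {L : FirstOrder.Language.{u, v}} (T : L.Theory) {α β : Type*}
    (φ : L.Formula (α ⊕ β)) : Prop :=
  ∃ (N : FirstOrder.Language.Theory.ModelType.{u, v, max u v} T)
    (a : ℕ → α → N) (b : ℕ → β → N),
    ∀ i j : ℕ, φ.Realize (Sum.elim (a i) (b j)) ↔ i < j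

/-- A formula `φ(x̄; ȳ)` (without parameters) has the independence property with respect to a
theory `T` if in some model of `T` there are tuples `(āᵢ : i < ω)` and `(b̄_S : S ⊆ ω)` such
that `φ(āᵢ; b̄_S)` holds iff `i ∈ S`. -/
def FormulaHasIP {L : FirstOrder.Language.{u, v}} (T : L.Theory) {α β : Type*}
    (φ : L.Formula (α ⊕ β)) : Prop :=
  ∃ (N : FirstOrder.Language.Theory.ModelType.{u, v, max u v} T)
    (a : ℕ → α → N) (b : Set ℕ → β → N),
    ∀ (i : ℕ) (S : Set ℕ), φ.Realize (Sum.elim (a i) (b S)) ↔ i ∈ S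

/-- A formula `φ(x̄; ȳ)` with parameters `c` from `M` has the order property if in some
elementary extension of `M` there are sequences `(āᵢ : i < ω)` and `(b̄ⱼ : j < ω)` such that
`φ(āᵢ; b̄ⱼ; c)` holds iff `i < j`. -/
def HasOPWithParams {L : FirstOrder.Language.{u, v}} {M : Type (max u v)} [L.Structure M]
    {α β γ : Type*} (φ : L.Formula ((α ⊕ β) ⊕ γ)) (c : γ → M) : Prop :=
  ∃ (N : ElemExt L M) (a : ℕ → α → N.carrier) (b : ℕ → β → N.carrier),
    ∀ i j : ℕ, φ.Realize (Sum.elim (Sum.elim (a i) (b j)) (N.emb ∘ c)) ↔ i < j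

/-- A formula `φ(x̄; ȳ)` with parameters `c` from `M` has the independence property if in some
elementary extension of `M` there are tuples `(āᵢ : i < ω)` and `(b̄_S : S ⊆ ω)` such that
`φ(āᵢ; b̄_S; c)` holds iff `i ∈ S`. -/
def HasIPWithParams {L : FirstOrder.Language.{u, v}} {M : Type (max u v)} [L.Structure M]
    {α β γ : Type*} (φ : L.Formula ((α ⊕ β) ⊕ γ)) (c : γ → M) : Prop :=
  ∃ (N : ElemExt L M) (a : ℕ → α → N.carrier) (b : Set ℕ → β → N.carrier),
    ∀ (i : ℕ) (S : Set ℕ), φ.Realize (Sum.elim (Sum.elim (a i) (b S)) (N.emb ∘ c)) ↔ i ∈ S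

/-- The family of tuples `(c̄ᵢ : i ∈ ι)` is an indiscernible sequence over the set `A`:
any two strictly increasing tuples of indices realize the same formulas with parameters
from `A`. -/
def IsIndiscernibleOver {L : FirstOrder.Language.{u, v}} {M : Type (max u v)} [L.Structure M]
    {ι : Type*} [LinearOrder ι] {γ : Type*} (c : ι → γ → M) (A : Set M) : Prop :=
  ∀ (n m : ℕ) (i j : Fin n → ι), StrictMono i → StrictMono j →
    ∀ p : Fin m → M, (∀ l, p l ∈ A) →
      ∀ φ : L.Formula (Fin n × γ ⊕ Fin m),
        φ.Realize (Sum.elim (fun v : Fin n × γ => c (i v.1) v.2) p) ↔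
          φ.Realize (Sum.elim (fun v : Fin n × γ => c (j v.1) v.2) p)

/-- The family of tuples `(c̄ᵢ : i ∈ ι)` is an indiscernible sequence. -/
def IsIndiscernible {L : FirstOrder.Language.{u, v}} {M : Type (max u v)} [L.Structure M]
    {ι : Type*} [LinearOrder ι] {γ : Type*} (c : ι → γ → M) : Prop :=
  IsIndiscernibleOver (L := L) c ∅

/-- Two families of tuples are mutually indiscernible if each is indiscernible over the union
of the tuples of the other. -/
def MutuallyIndiscernible {L : FirstOrder.Language.{u, v}} {M : Type (max u v)} [L.Structure M]
    {ι : Type*} [LinearOrder ι] {γ δ : Type*} (a : ι → γ → M) (b : ι → δ → M) : Prop :=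
  IsIndiscernibleOver (L := L) a (⋃ i, Set.range (b i)) ∧
    IsIndiscernibleOver (L := L) b (⋃ i, Set.range (a i))

/-- The family of tuples `(c̄ᵢ : i ∈ ι)` is totally indiscernible: any two tuples of distinct
indices (in any order) realize the same formulas. -/
def IsTotallyIndiscernible {L : FirstOrder.Language.{u, v}} {M : Type (max u v)} [L.Structure M]
    {ι : Type*} [LinearOrder ι] {γ : Type*} (c : ι → γ → M) : Prop :=
  ∀ (n : ℕ) (i j : Fin n → ι), Function.Injective i → Function.Injective j →
    ∀ φ : L.Formula (Fin n × γ),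
      φ.Realize (fun v : Fin n × γ => c (i v.1) v.2) ↔
        φ.Realize (fun v : Fin n × γ => c (j v.1) v.2)

/-- A set in a linear order is dense (in the order) and unbounded above and below. -/
def DenseUnbounded {α : Type*} [LinearOrder α] (S : Set α) : Prop :=
  (∀ x y : α, x < y → ∃ z ∈ S, x < z ∧ z < y) ∧ (∀ x : α, ∃ z ∈ S, z < x) ∧
    (∀ x : α, ∃ z ∈ S, x < z)

/-- `R : α → β → Prop` presents (a structure isomorphic to) the random ordered bipartite
graph `G*`, i.e. the Fraïssé limit of finite ordered bipartite graphs: both parts are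
countable nonempty dense linear orders without endpoints and the edge relation is generic. -/
def IsRandomOBG {α β : Type*} [LinearOrder α] [LinearOrder β] (R : α → β → Prop) : Prop :=
  Countable α ∧ Countable β ∧ Nonempty α ∧ Nonempty β ∧
    (∀ F G : Finset β, Disjoint F G →
      DenseUnbounded {x : α | (∀ f ∈ F, R x f) ∧ ∀ g ∈ G, ¬R x g}) ∧
    (∀ F G : Finset α, Disjoint F G →
      DenseUnbounded {y : β | (∀ f ∈ F, R f y) ∧ ∀ g ∈ G, ¬R g y})

/-- An element of the random ordered bipartite graph `G*`, whose two parts `U(G*)` and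
`V(G*)` are both identified with `ℚ`: `Sum.inl` is the `U`-part, `Sum.inr` the `V`-part. -/
abbrev GStarIdx : Type := ℚ ⊕ ℚ

/-- The index of the pair `(s, q)`: in the `U`-part if `s = true`, in the `V`-part
otherwise. -/
def mkIdx {n : ℕ} (s : Fin n → Bool) (q : Fin n → ℚ) : Fin n → GStarIdx := fun k =>
  bif s k then Sum.inl (q k) else Sum.inr (q k)

/-- Two pairs of elements of `G*` (with edge relation `R`) have the same quantifier-free
`L*`-type, where `L* = {U, ≤_U, V, ≤_V, R}`. -/
def SamePairType (R : ℚ → ℚ → Prop) :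
    GStarIdx → GStarIdx → GStarIdx → GStarIdx → Prop
  | Sum.inl p, Sum.inl q, Sum.inl p', Sum.inl q' => (p ≤ q ↔ p' ≤ q') ∧ (q ≤ p ↔ q' ≤ p')
  | Sum.inr p, Sum.inr q, Sum.inr p', Sum.inr q' => (p ≤ q ↔ p' ≤ q') ∧ (q ≤ p ↔ q' ≤ p')
  | Sum.inl p, Sum.inr q, Sum.inl p', Sum.inr q' => R p q ↔ R p' q'
  | Sum.inr q, Sum.inl p, Sum.inr q', Sum.inl p' => R p q ↔ R p' q'
  | _, _, _, _ => False

/-- Two tuples of elements of `G*` (with edge relation `R`) have the same quantifier-free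
`L*`-type. -/
def SameQfType (R : ℚ → ℚ → Prop) {n : ℕ} (i j : Fin n → GStarIdx) : Prop :=
  ∀ k l : Fin n, SamePairType R (i k) (i l) (j k) (j l)

/-- The variables carried by a coordinate of a mixed tuple: a `U`-index carries an `x̄`-tuple
of length `da`, a `V`-index a `ȳ`-tuple of length `db`. -/
def MixVar (da db : ℕ) : Bool → Type
  | true => Fin da
  | false => Fin db

/-- Choose the `a`-tuple or the `b`-tuple according to the side. -/
def pickSide {M : Type*} {da db : ℕ} (a : Fin da → M) (b : Fin db → M) :
    (s : Bool) → MixVar da db s → M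
  | true, w => a w
  | false, w => b w

/-- The family `(āᵢ : i ∈ U(G*) ≅ ℚ) ∪ (b̄ⱼ : j ∈ V(G*) ≅ ℚ)`, indexed by the random ordered
bipartite graph `G*` with edge relation `R`, is `L*`-indiscernible: index tuples with the same
quantifier-free `L*`-type in `G*` realize the same `L`-formulas in `M`. -/
def IsLStarIndiscernible {L : FirstOrder.Language.{u, v}} {M : Type (max u v)} [L.Structure M]
    (R : ℚ → ℚ → Prop) {da db : ℕ} (a : ℚ → Fin da → M) (b : ℚ → Fin db → M) : Prop :=
  ∀ (n : ℕ) (s : Fin n → Bool) (q q' : Fin n → ℚ),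
    SameQfType R (mkIdx s q) (mkIdx s q') →
      ∀ φ : L.Formula ((k : Fin n) × MixVar da db (s k)),
        φ.Realize (fun v => pickSide (a (q v.1)) (b (q v.1)) (s v.1) v.2) ↔
          φ.Realize (fun v => pickSide (a (q' v.1)) (b (q' v.1)) (s v.1) v.2)

/-! Suppose that `φ(x̄; ȳ)` has the order property. Stretch the witnessing sequences to an
indiscernible `(d_q)_{q ∈ ℚ}` such that, for `p ≠ q`, `φ` holds of the `x̄`-part of `d_p` and the
`ȳ`-part of `d_q` iff `p < q`. Let `c_q` be the `x̄`-part of `d_q` for `q ≠ 0`, and let `b = d_0`.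
The sequence `c` is indiscernible over `∅` but not over `b`, while the truth of a formula over `b`
at an increasing tuple from `c` depends only on how many of its indices are negative.

Add the entries of `b` one at a time: at some step `c` is indiscernible over `b'`, but not over
`b'y` with `y` a single element. Moving indices across the cut one by one gives a formula `ψ` over
`b'y` that holds with `k + 1` negative indices and fails with `k`. Fix all the indices but the
`k`-th as parameters, and let the `k`-th range over `K` consecutive ones: when the cut lies after
`r` of these, `ψ` holds exactly at the first `r`. By indiscernibility over `b'`, the position of the
cut can be absorbed into `y`, so for every `r ≤ K` some `y_r` makes `ψ` hold exactly at the first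
`r` of `K` fixed tuples. By compactness `ψ(x̄; y)`, with parameters, has the order property.

So `ȳ` may be taken to be a single variable. Exchange the roles of `x̄` and `ȳ`, put the parameters
among the variables, and apply the same argument once more. -/

section IteratedUltrafilter

variable {ι κ X : Type*} [DecidableEq ι] [DecidableEq κ] [Inhabited X] (U : Ultrafilter X)

/-- The iterated power of `U` along a list of coordinates: a property of `f : ι → X` holds almost
everywhere for `iteratedUltrafilter U [i₁, …, iₙ]` iff for `U`-almost all `x₁`, …, for `U`-almost
all `xₙ` it holds for the function with value `xₖ` at `iₖ` and `default` elsewhere. -/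
noncomputable def iteratedUltrafilter : List ι → Ultrafilter (ι → X)
  | [] => pure default
  | i :: l => U.bind fun x => (iteratedUltrafilter l).map fun f => Function.update f i x

theorem eventually_iteratedUltrafilter_nil {R : (ι → X) → Prop} :
    (∀ᶠ f in (iteratedUltrafilter U ([] : List ι) : Filter (ι → X)), R f) ↔ R default :=
  Iff.rfl

theorem eventually_iteratedUltrafilter_cons {i : ι} {l : List ι} {R : (ι → X) → Prop} :
    (∀ᶠ f in (iteratedUltrafilter U (i :: l) : Filter (ι → X)), R f) ↔
      ∀ᶠ x in (U : Filter X), ∀ᶠ f in (iteratedUltrafilter U l : Filter (ι → X)),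
        R (Function.update f i x) :=
  Iff.rfl

theorem eventually_iteratedUltrafilter_filter {s : Set ι} [DecidablePred (· ∈ s)]
    {R : (ι → X) → Prop} (hR : DependsOn R s) (l : List ι) :
    (∀ᶠ f in (iteratedUltrafilter U (l.filter (· ∈ s)) : Filter (ι → X)), R f) ↔
      ∀ᶠ f in (iteratedUltrafilter U l : Filter (ι → X)), R f := by
  induction l generalizing R with
  | nil => rfl
  | cons i l ih =>
    have hupdate (x : X) : DependsOn (fun f => R (Function.update f i x)) s := by
      intro f g hfg
      refine hR fun j hj => ?_
      rcases eq_or_ne j i with rfl | hji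
      · simp
      · simpa [hji] using hfg j hj
    by_cases hi : i ∈ s
    · simp only [List.filter_cons, hi, decide_true, if_true, eventually_iteratedUltrafilter_cons,
        ih (hupdate _)]
    · have hconst (x : X) (f : ι → X) : R (Function.update f i x) ↔ R f :=
        iff_of_eq <| hR fun j hj => Function.update_of_ne (ne_of_mem_of_not_mem hj hi) x f
      simp only [List.filter_cons, hi, decide_false, Bool.false_eq_true, if_false,
        eventually_iteratedUltrafilter_cons, hconst, Filter.eventually_const, ih hR]

theorem eventually_iteratedUltrafilter_map {e : κ → ι} (he : Function.Injective e) (l : List κ)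
    {R : (κ → X) → Prop} :
    (∀ᶠ f in (iteratedUltrafilter U (l.map e) : Filter (ι → X)), R (f ∘ e)) ↔
      ∀ᶠ f in (iteratedUltrafilter U l : Filter (κ → X)), R f := by
  induction l generalizing R with
  | nil => rfl
  | cons i l ih =>
    simp only [List.map_cons, eventually_iteratedUltrafilter_cons,
      Function.update_comp_eq_of_injective _ he]
    exact Filter.eventually_congr (.of_forall fun x => ih (R := fun f => R (Function.update f i x)))

end IteratedUltrafilter

section LinearIteratedUltrafilter

variable {ι X : Type*} [LinearOrder ι] [Inhabited X] (U : Ultrafilter X)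

variable (ι) in
/-- The limit of the iterated powers of `U` along the increasing enumerations of the finite subsets
of `ι`: an ultrafilter on `ι → X` whose restrictions to finite sets of coordinates depend only on
their size. -/
noncomputable def linearIteratedUltrafilter : Ultrafilter (ι → X) :=
  (Ultrafilter.of (Filter.atTop : Filter (Finset ι))).bind fun D => iteratedUltrafilter U D.sort

theorem eventually_linearIteratedUltrafilter_comp {n : ℕ} {e : Fin n → ι}
    (he : StrictMono e) {R : (Fin n → X) → Prop} :
    (∀ᶠ f in (linearIteratedUltrafilter ι U : Filter (ι → X)), R (f ∘ e)) ↔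
      ∀ᶠ f in (iteratedUltrafilter U (List.finRange n) : Filter (Fin n → X)), R f := by
  have hdep : DependsOn (fun f : ι → X => R (f ∘ e)) (Set.range e) := fun f g hfg =>
    congrArg R <| funext fun i => hfg (e i) ⟨i, rfl⟩
  have hmarginal : ∀ D ≥ Finset.univ.image e,
      ((∀ᶠ f in (iteratedUltrafilter U D.sort : Filter (ι → X)), R (f ∘ e)) ↔
        ∀ᶠ f in (iteratedUltrafilter U (List.finRange n) : Filter (Fin n → X)), R f) := by
    intro D hD
    have hsort : D.sort.filter (· ∈ Set.range e) = (List.finRange n).map e := by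
      refine List.SortedLT.eq_of_mem_iff
        (D.sortedLT_sort.pairwise.filter _).sortedLT
        ((List.sortedLT_finRange n).pairwise.map e he).sortedLT fun a => ?_
      have : (∃ i, e i = a) → a ∈ D := by
        rintro ⟨i, rfl⟩
        exact hD (Finset.mem_image_of_mem e (Finset.mem_univ i))
      simpa using this
    rw [← eventually_iteratedUltrafilter_filter U hdep, hsort,
      eventually_iteratedUltrafilter_map U he.injective]
  have hlim : ∀ᶠ D in (Ultrafilter.of (Filter.atTop : Filter (Finset ι)) : Filter (Finset ι)),
      Finset.univ.image e ≤ D :=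
    Ultrafilter.of_le _ (Filter.eventually_ge_atTop _)
  exact (Filter.eventually_congr (hlim.mono hmarginal)).trans Filter.eventually_const

theorem eventually_strictMono_linearIteratedUltrafilter {n : ℕ} {e : Fin n → ι}
    (he : StrictMono e) :
    ∀ᶠ f in (linearIteratedUltrafilter ι (Filter.hyperfilter ℕ) : Filter (ι → ℕ)),
      StrictMono (f ∘ e) := by
  have hlt (p q : ι) (hpq : p < q) :
      ∀ᶠ f in (linearIteratedUltrafilter ι (Filter.hyperfilter ℕ) : Filter (ι → ℕ)),
        f p < f q := by
    have hpq' : StrictMono ![p, q] := by simpa [Fin.strictMono_iff_lt_succ] using hpq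
    refine (eventually_linearIteratedUltrafilter_comp _ hpq' (R := fun g => g 0 < g 1)).2 ?_
    simp only [List.finRange_succ, List.finRange_zero, List.map_cons, List.map_nil,
      eventually_iteratedUltrafilter_cons, eventually_iteratedUltrafilter_nil]
    refine .of_forall fun x => ?_
    simpa [← Filter.eventually_iff] using Nat.hyperfilter_le_atTop (Filter.eventually_gt_atTop x)
  have hall : ∀ᶠ f in (linearIteratedUltrafilter ι (Filter.hyperfilter ℕ) : Filter (ι → ℕ)),
      ∀ i j, i < j → f (e i) < f (e j) := by
    simp only [Filter.eventually_all]
    exact fun i j hij => hlt _ _ (he hij)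
  exact hall.mono fun f hf i j hij => hf i j hij

end LinearIteratedUltrafilter

section Ultrapower

variable {L : FirstOrder.Language.{u, v}} {M : Type (max u v)} [L.Structure M] [Nonempty M]
  {I : Type} (W : Ultrafilter I)

variable (L M) in
/-- The ultrapower of `M` along `W`, as an elementary extension of `M` via constant families. -/
def ultrapower : ElemExt L M where
  carrier := (W : Filter I).Product fun _ => M
  emb :=
    { toFun := fun x => ((fun _ => x : I → M) : (W : Filter I).Product fun _ => M)
      map_formula' := fun _ φ x =>
        (Ultraproduct.realize_formula_cast (u := W) φ fun i _ => x i).trans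
          Filter.eventually_const }

/-- The element of the ultrapower represented by a family of elements of `M`. -/
def ultrapowerMk (x : I → M) : (ultrapower L M W).carrier :=
  (x : (W : Filter I).Product fun _ => M)

theorem realize_ultrapower {γ κ : Type*} (φ : L.Formula (γ ⊕ κ)) (x : γ → I → M) (c : κ → M) :
    φ.Realize (Sum.elim (fun g => ultrapowerMk W (x g)) ((ultrapower L M W).emb ∘ c)) ↔
      ∀ᶠ w in (W : Filter I), φ.Realize (Sum.elim (fun g => x g w) c) := by
  have hrep : Sum.elim (fun g => ultrapowerMk W (x g)) ((ultrapower L M W).emb ∘ c) =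
      fun v => ultrapowerMk W (Sum.elim x (fun k _ => c k) v) := by
    ext (g | k) <;> rfl
  have heval (w : I) : Sum.elim (fun g => x g w) c =
      fun v => Sum.elim x (fun k _ => c k) v w := by
    ext (g | k) <;> rfl
  simp only [hrep, heval]
  exact Ultraproduct.realize_formula_cast φ _

theorem hasOPWithParams_of_forall_ladder {α β κ : Type*} {φ : L.Formula ((α ⊕ β) ⊕ κ)} {c : κ → M}
    (h : ∀ K : ℕ, ∃ (a : ℕ → α → M) (b : ℕ → β → M), ∀ i < K, ∀ j < K,
      φ.Realize (Sum.elim (Sum.elim (a i) (b j)) c) ↔ i < j) :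
    HasOPWithParams φ c := by
  choose a b hab using h
  let W := Filter.hyperfilter ℕ
  refine ⟨ultrapower L M W, fun i x => ultrapowerMk W fun K => a K i x,
    fun j y => ultrapowerMk W fun K => b K j y, fun i j => ?_⟩
  have hlarge : ∀ᶠ K in (W : Filter ℕ),
      (φ.Realize (Sum.elim (Sum.elim (a K i) (b K j)) c) ↔ i < j) := by
    refine Filter.Eventually.mono (Nat.hyperfilter_le_atTop
      ((Filter.eventually_gt_atTop i).and (Filter.eventually_gt_atTop j))) ?_
    exact fun K hK => hab K i hK.1 j hK.2
  have hrep : Sum.elim (fun x => ultrapowerMk (L := L) W fun K => a K i x)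
      (fun y => ultrapowerMk W fun K => b K j y) =
        fun v => ultrapowerMk W fun K => Sum.elim (a K i) (b K j) v := by
    ext (x | y) <;> rfl
  rw [hrep, realize_ultrapower]
  exact (Filter.eventually_congr hlarge).trans Filter.eventually_const

theorem exists_isIndiscernibleOver_range {γ : Type*} (s : ℕ → γ → M) (ι : Type) [LinearOrder ι] :
    ∃ (N : ElemExt L M) (d : ι → γ → N.carrier),
      IsIndiscernibleOver (L := L) d (Set.range N.emb) ∧
      ∀ (n : ℕ) (κ : Type*) (φ : L.Formula (Fin n × γ ⊕ κ)) (p : κ → M),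
        (∀ i : Fin n → ℕ, StrictMono i → φ.Realize (Sum.elim (fun v => s (i v.1) v.2) p)) →
        ∀ j : Fin n → ι, StrictMono j →
          φ.Realize (Sum.elim (fun v => d (j v.1) v.2) (N.emb ∘ p)) := by
  let W := linearIteratedUltrafilter ι (Filter.hyperfilter ℕ)
  refine ⟨ultrapower L M W, fun q g => ultrapowerMk W fun f => s (f q) g, ?_, ?_⟩
  · intro n m i j hi hj p hp φ
    choose p' hp' using hp
    obtain rfl : (ultrapower L M W).emb ∘ p' = p := funext hp'
    rw [realize_ultrapower, realize_ultrapower]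
    exact (eventually_linearIteratedUltrafilter_comp _ hi
      (R := fun f => φ.Realize (Sum.elim (fun v => s (f v.1) v.2) p'))).trans
        (eventually_linearIteratedUltrafilter_comp _ hj).symm
  · intro n κ φ p hφ j hj
    rw [realize_ultrapower]
    exact (eventually_strictMono_linearIteratedUltrafilter hj).mono fun f hf => hφ (f ∘ j) hf

end Ultrapower

section Cut

variable {ι : Type*} {S : Set ι} {n : ℕ}

theorem exists_forall_mem_iff_castSucc_lt [Preorder ι] (hS : IsLowerSet S) {i : Fin n → ι}
    (hi : Monotone i) :
    ∃ k : Fin (n + 1), ∀ l, i l ∈ S ↔ l.castSucc < k := by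
  classical
  have hex : ∃ k : ℕ, ∀ l : Fin n, k ≤ l → i l ∉ S := ⟨n, fun l hl => absurd l.2 hl.not_gt⟩
  have hle : Nat.find hex ≤ n := Nat.find_min' hex fun l hl => absurd l.2 hl.not_gt
  refine ⟨⟨Nat.find hex, Nat.lt_succ_of_le hle⟩, fun l => ⟨fun hl => ?_, fun hl => ?_⟩⟩
  · exact not_le.1 fun hkl => Nat.find_spec hex l hkl hl
  · have hmin := Nat.find_min hex hl
    push Not at hmin
    obtain ⟨l', hll', hl'⟩ := hmin
    exact hS (hi hll') hl'

theorem isLowerSet_Iio_ne [Preorder ι] (z : ι) :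
    IsLowerSet {q : {q // q ≠ z} | (q : ι) < z} :=
  (isLowerSet_Iio z).preimage (Subtype.mono_coe _)

theorem strictMono_insertNth [Preorder ι] {i : Fin n → ι} (hi : StrictMono i) {z : ι}
    {k : Fin (n + 1)} (hlt : ∀ l, l.castSucc < k → i l < z)
    (hgt : ∀ l, k ≤ l.castSucc → z < i l) :
    StrictMono (k.insertNth z i : Fin (n + 1) → ι) := by
  intro x y
  cases x using k.succAboveCases <;> cases y using k.succAboveCases
  · simp
  · simpa [Fin.lt_succAbove_iff_le_castSucc] using hgt _
  · simpa [Fin.succAbove_lt_iff_castSucc_lt] using hlt _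
  · simpa using @hi _ _

/-- The lower set `S` contains the increasing sequence `f`, and its complement contains the
decreasing sequence `g`. -/
structure IsCutPair [Preorder ι] (S : Set ι) (f g : ℕ → ι) : Prop where
  isLowerSet : IsLowerSet S
  strictMono : StrictMono f
  mem : ∀ m, f m ∈ S
  strictAnti : StrictAnti g
  notMem : ∀ m, g m ∉ S

/-- The `n`-tuple with entries `f 0, …, f (k - 1), g (n - 1 - k), …, g 0`: given a cut pair, the
increasing tuple with exactly `k` entries below the cut. -/
def cutTuple (f g : ℕ → ι) (n k : ℕ) (l : Fin n) : ι :=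
  if (l : ℕ) < k then f l else g l.rev

variable {f g : ℕ → ι}

theorem IsCutPair.cutTuple_mem_iff [Preorder ι] (h : IsCutPair S f g) {k : ℕ} {l : Fin n} :
    cutTuple f g n k l ∈ S ↔ (l : ℕ) < k := by
  unfold cutTuple
  split_ifs with hl <;> simp [hl, h.mem, h.notMem]

theorem IsCutPair.strictMono_cutTuple [LinearOrder ι] (h : IsCutPair S f g) (k : ℕ) :
    StrictMono (cutTuple f g n k) := by
  intro l m hlm
  have : (l : ℕ) < m := hlm
  unfold cutTuple
  split_ifs
  · exact h.strictMono hlm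
  · exact not_le.1 fun hle => h.notMem _ (h.isLowerSet hle (h.mem _))
  · omega
  · exact h.strictAnti (Fin.rev_lt_rev.2 hlm)

/-- The inclusion of `Fin n` into `Fin (n + K)` that replaces the entry `k` by an interval of length
`K + 1` and sends `k` to the position `t` in it. -/
def blowUp {n K : ℕ} (k : Fin n) (t : Fin K) (l : Fin n) : Fin (n + K) :=
  ⟨if l < k then l else if l = k then k + t else l + K, by split_ifs <;> omega⟩

theorem strictMono_blowUp {K : ℕ} (k : Fin n) (t : Fin K) : StrictMono (blowUp k t) := by
  intro l m hlm
  simp only [blowUp, Fin.lt_def, Fin.ext_iff] at *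
  split_ifs <;> omega

theorem blowUp_lt_add_iff {K r : ℕ} (hr : r ≤ K) (k : Fin n) (t : Fin K) (l : Fin n) :
    (blowUp k t l : ℕ) < k + r ↔ (l : ℕ) < if (t : ℕ) < r then (k : ℕ) + 1 else k := by
  simp only [blowUp, Fin.lt_def, Fin.ext_iff]
  split_ifs <;> omega

theorem cutTuple_blowUp_of_ne {K : ℕ} {k : Fin n} (t : Fin K) {l : Fin n} (hl : l ≠ k) :
    cutTuple f g (n + K) k (blowUp k t l) = cutTuple f g n k l := by
  by_cases hlk : l < k
  · simp [cutTuple, blowUp, hlk]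
  · have hnot : ¬ (l + K : ℕ) < k := by omega
    have hrev : n + K - (l + K + 1) = n - (l + 1) := by omega
    simp [cutTuple, blowUp, hlk, hl, hnot, hrev, Fin.val_rev]

theorem exists_isCutPair_ne [LinearOrder ι] [DenselyOrdered ι] [NoMinOrder ι] [NoMaxOrder ι]
    (z : ι) : ∃ f g, IsCutPair {q : {q // q ≠ z} | (q : ι) < z} f g := by
  obtain ⟨f, hf⟩ := Nat.exists_strictMono (Set.Iio z)
  obtain ⟨g, hg⟩ := Nat.exists_strictAnti (Set.Ioi z)
  exact ⟨fun m => ⟨f m, (f m).2.ne⟩, fun m => ⟨g m, (g m).2.ne'⟩,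
    { isLowerSet := isLowerSet_Iio_ne z
      strictMono := hf
      mem := fun m => (f m).2
      strictAnti := hg
      notMem := fun m => not_lt_of_gt (g m).2 }⟩

end Cut

section CutIndiscernible

variable {L : FirstOrder.Language.{u, v}} {M : Type (max u v)} [L.Structure M] {ι γ δ κ : Type*}
  [LinearOrder ι] {S : Set ι}

theorem IsIndiscernibleOver.mono {c : ι → γ → M} {A B : Set M}
    (hc : IsIndiscernibleOver (L := L) c B) (hAB : A ⊆ B) : IsIndiscernibleOver (L := L) c A :=
  fun n m i j hi hj p hp φ => hc n m i j hi hj p (fun l => hAB (hp l)) φ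

theorem IsIndiscernible.realize_iff {d : ι → γ → M} (hd : IsIndiscernible (L := L) d) {n : ℕ}
    {i j : Fin n → ι} (hi : StrictMono i) (hj : StrictMono j) (φ : L.Formula (Fin n × γ)) :
    (φ.Realize fun v => d (i v.1) v.2) ↔ φ.Realize fun v => d (j v.1) v.2 := by
  simpa [Formula.realize_relabel, Function.comp_def] using
    hd n 0 i j hi hj Fin.elim0 (fun l => l.elim0) (φ.relabel Sum.inl)

/-- The sequence `c` is indiscernible over the tuple `b`, given the cut `S`: the formulas over `b`
realized at a strictly increasing tuple of indices depend only on which of its entries lie in `S`.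
Indiscernibility over `b` without any cut is the case `S = ∅`. -/
def IsCutIndiscernible (S : Set ι) (c : ι → γ → M) (b : κ → M) : Prop :=
  ∀ (n : ℕ) (i j : Fin n → ι), StrictMono i → StrictMono j → (∀ l, i l ∈ S ↔ j l ∈ S) →
    ∀ φ : L.Formula (Fin n × γ ⊕ κ),
      φ.Realize (Sum.elim (fun v => c (i v.1) v.2) b) ↔
        φ.Realize (Sum.elim (fun v => c (j v.1) v.2) b)

theorem IsCutIndiscernible.comp_params {c : ι → γ → M} {b : κ → M}
    (hc : IsCutIndiscernible (L := L) S c b) (e : δ → κ) :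
    IsCutIndiscernible (L := L) S c (b ∘ e) := by
  intro n i j hi hj hij φ
  simpa [Formula.realize_relabel, Sum.elim_comp_map] using
    hc n i j hi hj hij (φ.relabel (Sum.map id e))

theorem IsIndiscernible.isCutIndiscernible_of_isEmpty [IsEmpty κ] {d : ι → γ → M}
    (hd : IsIndiscernible (L := L) d) (b : κ → M) : IsCutIndiscernible (L := L) S d b := by
  intro n i j hi hj _ φ
  have hrelabel (i : Fin n → ι) : φ.Realize (Sum.elim (fun v => d (i v.1) v.2) b) ↔
      (φ.relabel (Sum.elim id isEmptyElim)).Realize fun v => d (i v.1) v.2 := by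
    rw [Formula.realize_relabel]
    exact iff_of_eq <| congrArg _ <| funext <| Sum.rec (fun _ => rfl) isEmptyElim
  rw [hrelabel, hrelabel, hd.realize_iff hi hj]

theorem IsIndiscernible.comp_strictMono {ι' : Type*} [LinearOrder ι'] {d : ι → γ → M}
    (hd : IsIndiscernible (L := L) d) {e : ι' → ι} (he : StrictMono e) (g : δ → γ) :
    IsIndiscernible (L := L) fun q => d (e q) ∘ g := by
  intro n m i j hi hj p hp φ
  have h := hd n m _ _ (he.comp hi) (he.comp hj) p hp (φ.relabel (Sum.map (Prod.map id g) id))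
  simp only [Formula.realize_relabel, Sum.elim_comp_map, Function.comp_id] at h
  exact h

theorem IsIndiscernible.isCutIndiscernible_apply {d : ι → γ → M}
    (hd : IsIndiscernible (L := L) d) (z : ι) (g : δ → γ) :
    IsCutIndiscernible (L := L) {q : {q // q ≠ z} | (q : ι) < z} (fun q => d q ∘ g) (d z) := by
  intro n i j hi hj hij φ
  obtain ⟨k, hk⟩ := exists_forall_mem_iff_castSucc_lt (isLowerSet_Iio_ne z) hi.monotone
  have hmono (i : Fin n → {q // q ≠ z}) (hi : StrictMono i)
      (hk : ∀ l, (i l : ι) < z ↔ l.castSucc < k) :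
      StrictMono (k.insertNth z fun l => (i l : ι) : Fin (n + 1) → ι) :=
    strictMono_insertNth (i := fun l => (i l : ι)) (fun _ _ h => hi h) (fun l => (hk l).2)
      fun l hl => lt_of_le_of_ne (not_lt.1 (mt (hk l).1 hl.not_gt)) (i l).2.symm
  have hrelabel (i : Fin n → {q // q ≠ z}) :
      φ.Realize (Sum.elim (fun v => (d (i v.1) ∘ g) v.2) (d z)) ↔
        (φ.relabel (Sum.elim (Prod.map k.succAbove g) (Prod.mk k))).Realize
          fun v => d ((k.insertNth z fun l => (i l : ι) : Fin (n + 1) → ι) v.1) v.2 := by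
    rw [Formula.realize_relabel]
    refine iff_of_eq <| congrArg _ <| funext <| Sum.rec (fun v => ?_) fun x => ?_ <;> simp
  rw [hrelabel, hrelabel]
  exact hd.realize_iff (hmono i hi hk) (hmono j hj fun l => (hij l).symm.trans (hk l)) _

theorem exists_realize_iff_exists_forall {V τ : Type*} [Finite δ] [Finite τ]
    (φ : τ → L.Formula (V ⊕ δ)) (q : τ → Prop) :
    ∃ θ : L.Formula V, ∀ (M : Type (max u v)) [L.Structure M] (v : V → M),
      θ.Realize v ↔ ∃ y : δ → M, ∀ t, (φ t).Realize (Sum.elim v y) ↔ q t := by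
  classical
  refine ⟨Formula.iExs δ (Formula.iInf fun t => if q t then φ t else (φ t).not), fun M _ v => ?_⟩
  simp only [Formula.realize_iExs, Formula.realize_iInf]
  refine exists_congr fun y => forall_congr' fun t => ?_
  split_ifs with ht <;> simp [ht]

theorem hasOPWithParams_relabel {κ' : Type*} {φ : L.Formula ((γ ⊕ δ) ⊕ κ)} {e : κ → κ'}
    {c : κ' → M} :
    HasOPWithParams (φ.relabel (Sum.map id e)) c ↔ HasOPWithParams φ (c ∘ e) := by
  simp only [HasOPWithParams, Formula.realize_relabel, Sum.elim_comp_map, Function.comp_id,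
    Function.comp_assoc]

variable {f g : ℕ → ι} {c : ι → γ → M} {b : δ → M} {p : κ → M}

theorem IsCutIndiscernible.realize_blowUp_iff (hfg : IsCutPair S f g)
    (hp : IsCutIndiscernible (L := L) S c p) {n : ℕ} {k : Fin n} {φ : L.Formula (Fin n × γ ⊕ κ)}
    (hsucc : φ.Realize (Sum.elim (fun v => c (cutTuple f g n (k + 1) v.1) v.2) p))
    (hself : ¬ φ.Realize (Sum.elim (fun v => c (cutTuple f g n k v.1) v.2) p))
    {K r : ℕ} (hr : r ≤ K) (t : Fin K) :
    φ.Realize (Sum.elim (fun v => c (cutTuple f g (n + K) (k + r) (blowUp k t v.1)) v.2) p) ↔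
      (t : ℕ) < r := by
  have hcut := hp n _ (cutTuple f g n (if (t : ℕ) < r then (k : ℕ) + 1 else k))
    ((hfg.strictMono_cutTuple (k + r)).comp (strictMono_blowUp k t)) (hfg.strictMono_cutTuple _)
    (fun l => by simp only [Function.comp_apply, hfg.cutTuple_mem_iff, blowUp_lt_add_iff hr]) φ
  refine hcut.trans ?_
  split_ifs with ht
  · exact iff_of_true hsucc ht
  · exact iff_of_false hself ht

theorem IsCutIndiscernible.exists_ladder [Finite δ] (hfg : IsCutPair S f g)
    (hbp : IsCutIndiscernible (L := L) S c (Sum.elim b p))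
    (hp : IsCutIndiscernible (L := L) ∅ c p)
    {n : ℕ} {k : Fin n} {φ : L.Formula (Fin n × γ ⊕ (δ ⊕ κ))}
    (hsucc : φ.Realize
      (Sum.elim (fun v => c (cutTuple f g n (k + 1) v.1) v.2) (Sum.elim b p)))
    (hself : ¬ φ.Realize (Sum.elim (fun v => c (cutTuple f g n k v.1) v.2) (Sum.elim b p)))
    {K r : ℕ} (hr : r ≤ K) :
    ∃ y : δ → M, ∀ t : Fin K,
      φ.Realize (Sum.elim (fun v => c (cutTuple f g (n + K) k (blowUp k t v.1)) v.2)
        (Sum.elim y p)) ↔ (t : ℕ) < r := by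
  let ρ (t : Fin K) : Fin n × γ ⊕ (δ ⊕ κ) → (Fin (n + K) × γ ⊕ κ) ⊕ δ :=
    Sum.elim (fun v => .inl (.inl (blowUp k t v.1, v.2))) (Sum.elim .inr (.inl ∘ .inr))
  obtain ⟨θ, hθ⟩ := exists_realize_iff_exists_forall (fun t => φ.relabel (ρ t)) fun t => (t : ℕ) < r
  have hvaluation (i : Fin (n + K) → ι) (y : δ → M) (t : Fin K) :
      Sum.elim (Sum.elim (fun v => c (i v.1) v.2) p) y ∘ ρ t =
        Sum.elim (fun v => c (i (blowUp k t v.1)) v.2) (Sum.elim y p) := by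
    ext (_ | _ | _) <;> rfl
  simp only [Formula.realize_relabel] at hθ
  simp only [← hvaluation (cutTuple f g (n + K) k)]
  rw [← hθ]
  refine (hp _ _ _ (hfg.strictMono_cutTuple k) (hfg.strictMono_cutTuple (k + r))
    (fun _ => Iff.rfl) θ).2 ((hθ _ _).2 ⟨b, fun t => ?_⟩)
  rw [hvaluation]
  exact hbp.realize_blowUp_iff hfg hsucc hself hr t

theorem IsCutIndiscernible.exists_hasOPWithParams [Nonempty M] [Finite γ] [Finite δ] [Finite κ]
    (hfg : IsCutPair S f g) (hbp : IsCutIndiscernible (L := L) S c (Sum.elim b p))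
    (hp : IsCutIndiscernible (L := L) ∅ c p)
    {n : ℕ} {k : Fin n} {φ : L.Formula (Fin n × γ ⊕ (δ ⊕ κ))}
    (hsucc : φ.Realize
      (Sum.elim (fun v => c (cutTuple f g n (k + 1) v.1) v.2) (Sum.elim b p)))
    (hself : ¬ φ.Realize (Sum.elim (fun v => c (cutTuple f g n k v.1) v.2) (Sum.elim b p))) :
    ∃ (m : ℕ) (ψ : L.Formula ((γ ⊕ δ) ⊕ Fin m)) (q : Fin m → M), HasOPWithParams ψ q := by
  let ρ : Fin n × γ ⊕ (δ ⊕ κ) → (γ ⊕ δ) ⊕ (Fin n × γ ⊕ κ) :=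
    Sum.elim (fun v => if v.1 = k then .inl (.inl v.2) else .inr (.inl v))
      (Sum.map .inr .inr)
  let q : Fin n × γ ⊕ κ → M := Sum.elim (fun v => c (cutTuple f g n k v.1) v.2) p
  suffices hop : HasOPWithParams (φ.relabel ρ) q by
    obtain ⟨m, ⟨e⟩⟩ := Finite.exists_equiv_fin (Fin n × γ ⊕ κ)
    refine ⟨m, (φ.relabel ρ).relabel (Sum.map id e), q ∘ e.symm, ?_⟩
    rw [hasOPWithParams_relabel, Function.comp_assoc, e.symm_comp_self, Function.comp_id]
    exact hop
  refine hasOPWithParams_of_forall_ladder fun K => ?_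
  choose! y hy using fun r (hr : r ≤ K) => hbp.exists_ladder hfg hp hsucc hself hr
  refine ⟨fun t => if ht : t < K then c (cutTuple f g (n + K) k (blowUp k ⟨t, ht⟩ k))
    else fun _ => Classical.arbitrary M, y, fun t ht r hr => ?_⟩
  rw [Formula.realize_relabel, ← hy r hr.le ⟨t, ht⟩]
  refine iff_of_eq <| congrArg _ <| funext ?_
  rintro (⟨l, x⟩ | _ | _)
  · by_cases hl : l = k
    · simp [ρ, hl, ht]
    · simp [ρ, q, hl, cutTuple_blowUp_of_ne]
  all_goals rfl

theorem IsCutIndiscernible.empty_of_cutTuple (hfg : IsCutPair S f g)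
    (hp : IsCutIndiscernible (L := L) S c p)
    (h : ∀ (n : ℕ) (k : Fin n) (φ : L.Formula (Fin n × γ ⊕ κ)),
      φ.Realize (Sum.elim (fun v => c (cutTuple f g n (k + 1) v.1) v.2) p) →
        φ.Realize (Sum.elim (fun v => c (cutTuple f g n k v.1) v.2) p)) :
    IsCutIndiscernible (L := L) ∅ c p := by
  intro n i j hi hj _ φ
  have hstep (k : Fin n) :
      φ.Realize (Sum.elim (fun v => c (cutTuple f g n (k + 1) v.1) v.2) p) ↔
        φ.Realize (Sum.elim (fun v => c (cutTuple f g n k v.1) v.2) p) :=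
    ⟨h n k φ, not_imp_not.1 (by simpa using h n k φ.not)⟩
  have hzero (k : ℕ) (hk : k ≤ n) :
      φ.Realize (Sum.elim (fun v => c (cutTuple f g n k v.1) v.2) p) ↔
        φ.Realize (Sum.elim (fun v => c (cutTuple f g n 0 v.1) v.2) p) := by
    induction k with
    | zero => rfl
    | succ k ih => exact (hstep ⟨k, hk⟩).trans (ih (Nat.le_of_succ_le hk))
  have hcanonical (i : Fin n → ι) (hi : StrictMono i) :
      φ.Realize (Sum.elim (fun v => c (i v.1) v.2) p) ↔
        φ.Realize (Sum.elim (fun v => c (cutTuple f g n 0 v.1) v.2) p) := by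
    obtain ⟨k, hk⟩ := exists_forall_mem_iff_castSucc_lt hfg.isLowerSet hi.monotone
    refine (hp n i (cutTuple f g n k) hi (hfg.strictMono_cutTuple k) (fun l => ?_) φ).trans
      (hzero k (Nat.le_of_lt_succ k.2))
    rw [hk, hfg.cutTuple_mem_iff, Fin.lt_def, Fin.val_castSucc]
  rw [hcanonical i hi, hcanonical j hj]

theorem IsCutIndiscernible.empty_of_forall_not_hasOPWithParams [Nonempty M] [Finite γ] [Finite κ]
    (hfg : IsCutPair S f g) (hp : IsCutIndiscernible (L := L) S c p)
    (hc : IsIndiscernible (L := L) c)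
    (h : ∀ (m : ℕ) (ψ : L.Formula ((γ ⊕ Fin 1) ⊕ Fin m)) (q : Fin m → M),
      ¬ HasOPWithParams ψ q) :
    IsCutIndiscernible (L := L) ∅ c p := by
  revert p
  induction κ using Finite.induction_empty_option with
  | of_equiv e ih =>
    intro p hp
    simpa [Function.comp_assoc] using (ih (hp.comp_params e)).comp_params e.symm
  | h_empty => exact fun {p} _ => hc.isCutIndiscernible_of_isEmpty p
  | @h_option κ _ ih =>
    intro p hp
    let toOption : Fin 1 ⊕ κ → Option κ := Sum.elim (fun _ => none) some
    let ofOption : Option κ → Fin 1 ⊕ κ := fun o => o.elim (.inl 0) .inr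
    have hsome := ih (hp.comp_params some)
    have hsum :
        IsCutIndiscernible (L := L) S c (Sum.elim (fun _ : Fin 1 => p none) (p ∘ some)) := by
      convert hp.comp_params toOption
      ext (_ | _) <;> rfl
    have hempty := hsum.empty_of_cutTuple hfg fun n k φ hsucc => by
      by_contra hself
      obtain ⟨m, ψ, q, hψ⟩ := hsum.exists_hasOPWithParams hfg hsome hsucc hself
      exact h m ψ q hψ
    convert hempty.comp_params ofOption
    ext (_ | _) <;> rfl

end CutIndiscernible

section OrderProperty

variable {L : FirstOrder.Language.{u, v}} {T : L.Theory} {α β κ : Type*}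

theorem ElemExt.nonempty {M : Type (max u v)} [L.Structure M] [Nonempty M] (N : ElemExt L M) :
    Nonempty N.carrier :=
  Nonempty.map N.emb inferInstance

theorem ElemExt.model {M : Type (max u v)} [L.Structure M] (N : ElemExt L M) (T : L.Theory)
    [M ⊨ T] : N.carrier ⊨ T :=
  (N.emb.theory_model_iff T).1 inferInstance

theorem formulaHasOP_of_realize_iff {M : Type (max u v)} [L.Structure M] [Nonempty M] [M ⊨ T]
    {φ : L.Formula (α ⊕ β)} {a : ℕ → α → M} {b : ℕ → β → M}
    (h : ∀ i j, φ.Realize (Sum.elim (a i) (b j)) ↔ i < j) : FormulaHasOP T φ :=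
  ⟨.of T M, a, b, h⟩

theorem exists_isIndiscernible_of_ladder {M : Type (max u v)} [L.Structure M] [Nonempty M]
    {φ : L.Formula (α ⊕ β)} {a : ℕ → α → M} {b : ℕ → β → M}
    (hab : ∀ i j, φ.Realize (Sum.elim (a i) (b j)) ↔ i < j) (ι : Type) [LinearOrder ι] :
    ∃ (N : ElemExt L M) (d : ι → α ⊕ β → N.carrier), IsIndiscernible (L := L) d ∧
      ∀ p q, p ≠ q → (φ.Realize (Sum.elim (d p ∘ Sum.inl) (d q ∘ Sum.inr)) ↔ p < q) := by
  obtain ⟨N, d, hd, htransfer⟩ :=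
    exists_isIndiscernibleOver_range (L := L) (fun i => Sum.elim (a i) (b i)) ι
  let ρ (x y : Fin 2) : α ⊕ β → Fin 2 × (α ⊕ β) ⊕ Empty := Sum.elim
    (fun z => .inl (x, .inl z)) fun z => .inl (y, .inr z)
  have hρ {P : Type (max u v)} (s : Fin 2 → α ⊕ β → P) (e : Empty → P) (x y : Fin 2) :
      Sum.elim (fun v => s v.1 v.2) e ∘ ρ x y = Sum.elim (s x ∘ Sum.inl) (s y ∘ Sum.inr) := by
    ext (_ | _) <;> rfl
  have hpos (p q : ι) (hpq : p < q) :
      φ.Realize (Sum.elim (d p ∘ Sum.inl) (d q ∘ Sum.inr)) := by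
    have := htransfer 2 Empty (φ.relabel (ρ 0 1)) Empty.elim
      (fun i hi => by
        simpa [hρ fun x => Sum.elim (a (i x)) (b (i x)), hab] using hi Fin.zero_lt_one)
      ![p, q] (by simpa [Fin.strictMono_iff_lt_succ] using hpq)
    simpa [hρ fun x => d (![p, q] x)] using this
  have hneg (p q : ι) (hqp : q < p) :
      ¬ φ.Realize (Sum.elim (d p ∘ Sum.inl) (d q ∘ Sum.inr)) := by
    have := htransfer 2 Empty (φ.relabel (ρ 1 0)).not Empty.elim
      (fun i hi => by
        simpa [hρ fun x => Sum.elim (a (i x)) (b (i x)), hab] using (hi Fin.zero_lt_one).le)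
      ![q, p] (by simpa [Fin.strictMono_iff_lt_succ] using hqp)
    simpa [hρ fun x => d (![q, p] x)] using this
  refine ⟨N, d, hd.mono (Set.empty_subset _), fun p q hpq => ⟨fun h => ?_, hpos p q⟩⟩
  exact hpq.lt_or_gt.resolve_right fun hqp => hneg p q hqp h

theorem FormulaHasOP.exists_hasOPWithParams [Finite α] [Finite β] {φ : L.Formula (α ⊕ β)}
    (hφ : FormulaHasOP T φ) :
    ∃ (N : Theory.ModelType.{u, v, max u v} T) (m : ℕ) (ψ : L.Formula ((α ⊕ Fin 1) ⊕ Fin m))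
      (q : Fin m → N), HasOPWithParams ψ q := by
  obtain ⟨M, a, b, hab⟩ := hφ
  obtain ⟨N, d, hd, hlt⟩ := exists_isIndiscernible_of_ladder hab ℚ
  have := N.model T
  have := N.nonempty
  by_contra! hno
  obtain ⟨f, g, hfg⟩ := exists_isCutPair_ne (0 : ℚ)
  have hind : IsCutIndiscernible (L := L) ∅ (fun q : {q : ℚ // q ≠ 0} => d q ∘ Sum.inl) (d 0) :=
    (hd.isCutIndiscernible_apply 0 Sum.inl).empty_of_forall_not_hasOPWithParams hfg
      (hd.comp_strictMono (Subtype.strictMono_coe _) _) (hno (.of T N.carrier))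
  let ρ : α ⊕ β → Fin 1 × α ⊕ (α ⊕ β) := Sum.map (Prod.mk 0) .inr
  have hρ (q : {q : ℚ // q ≠ 0}) :
      (φ.relabel ρ).Realize (Sum.elim (fun v => (d q ∘ Sum.inl) v.2) (d 0)) ↔ (q : ℚ) < 0 := by
    rw [Formula.realize_relabel, Sum.elim_comp_map]
    exact hlt q 0 q.2
  have hiff := hind 1 (fun _ => ⟨-1, by norm_num⟩) (fun _ => ⟨1, by norm_num⟩)
    (Subsingleton.strictMono _) (Subsingleton.strictMono _) (fun _ => Iff.rfl) (φ.relabel ρ)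
  have hsign := (hρ _).symm.trans (hiff.trans (hρ _))
  norm_num at hsign

theorem HasOPWithParams.formulaHasOP_not_swap {M : Type (max u v)} [L.Structure M] [Nonempty M]
    [M ⊨ T] {φ : L.Formula ((α ⊕ β) ⊕ κ)} {c : κ → M} (hφ : HasOPWithParams φ c) :
    FormulaHasOP T (φ.relabel
      (Sum.elim (Sum.elim (.inr ∘ .inl) .inl) (.inr ∘ .inr) : _ → β ⊕ (α ⊕ κ))).not := by
  obtain ⟨N, a, b, hab⟩ := hφ
  have := N.model T
  have := N.nonempty
  refine formulaHasOP_of_realize_iff (a := fun i => b (i + 1))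
    (b := fun j => Sum.elim (a j) (N.emb ∘ c)) fun i j => ?_
  rw [Formula.realize_not, Formula.realize_relabel, ← not_le, ← Nat.lt_succ_iff, ← hab]
  simp only [Sum.comp_elim, ← Function.comp_assoc, Sum.elim_comp_inr, Sum.elim_comp_inl]

end OrderProperty

theorem stable_of_two_single_variables_with_params_general {L : FirstOrder.Language.{u, v}}
    (T : L.Theory)
    (h : ∀ (M : Type (max u v)) [L.Structure M] [Nonempty M], M ⊨ T →
      ∀ (k : ℕ) (φ : L.Formula ((Fin 1 ⊕ Fin 1) ⊕ Fin k)) (c : Fin k → M),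
        ¬ HasOPWithParams φ c)
    {α β : Type*} [Finite α] [Finite β] (φ : L.Formula (α ⊕ β)) : ¬ FormulaHasOP T φ := by
  intro hφ
  obtain ⟨M, m, ψ, c, hψ⟩ := hφ.exists_hasOPWithParams
  obtain ⟨N, n, θ, p, hθ⟩ := hψ.formulaHasOP_not_swap (T := T).exists_hasOPWithParams
  exact h N inferInstance n θ p hθ

/-- If, in every model `M` of the complete theory `T`, every formula `φ(x; y)` in
two single variables with parameters from `M` does not have the order property, then `T` is
stable: no parameter-free formula `φ(x̄; ȳ)` has the order property. -/
theorem stable_of_two_single_variables_with_params {L : FirstOrder.Language.{u, v}}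
    (T : L.Theory) (hT : T.IsComplete)
    (h : ∀ (M : Type (max u v)) [L.Structure M] [Nonempty M], M ⊨ T →
      ∀ (k : ℕ) (φ : L.Formula ((Fin 1 ⊕ Fin 1) ⊕ Fin k)) (c : Fin k → M),
        ¬ HasOPWithParams φ c) :
    ∀ (m n : ℕ) (φ : L.Formula (Fin m ⊕ Fin n)), ¬ FormulaHasOP T φ := by
  exact fun m n φ => stable_of_two_single_variables_with_params_general T h φ
end

section
/- Let T be a complete first-order theory in a language L. Assume that for every model M of T, every formula φ(x;y) with parameters from M, where x and y are single variables, is NIP (does not have the independence property). Then T is NIP, i.e., no L-formula φ(x̄;ȳ) (in any finite tuples of variables, without parameters) has the independence property. -/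
open FirstOrder FirstOrder.Language

universe u v

/-!
NIP of `φ(x̄; ȳ; c̄)` uniformly in the parameters `c̄` is a uniform bound on the VC-dimension of the
families cut out by its instances, a property of a single model. If a formula in single variables
`x` and `y` had no such bound, an ultrapower would give it the independence property. So it is
enough to enlarge `x̄` and `ȳ` one variable at a time, and, as NIP passes to the dual family, only
`ȳ` has to be enlarged, to `ȳȳ'`.

Suppose that the pairs `(b̄, b̄')` cut out every subset of a very long sequence of `x̄`-tuples. By
Ramsey's theorem one may assume that the truth of all relevant formulas at a tuple of members of the
sequence depends only on its order type. Split the sequence into consecutive pairs and choose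
`(b̄, b̄')` containing exactly the upper side of each pair. If `d̄` picks one side of each of some
pairs, then `b̄'` witnesses `∃ ȳ', ⋀ᵢ (φ(d̄ᵢ; b̄, ȳ') ↔ i ∈ S)`, where `S` is the set of upper sides
in `d̄`. A second use of Ramsey's theorem makes the truth of these formulas at `b̄` independent of
the choice of pairs. The formulas have bounded VC-dimension in one `x̄ᵢ` and `ȳ`, so that their
truth is also independent of the sides taken in `d̄`. Hence over `b̄` every subset of the upper
sides is cut out, which contradicts the bound for `φ` in `x̄` and `ȳ'` with parameters `b̄`.
-/

section Ramsey

variable {α C : Type*} [LinearOrder α] {χ : Finset α → C} {k n : ℕ} {x : α} {B : Finset α}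

/-- A finite set all of whose `k`-element subsets receive the same colour from `χ`. -/
def IsHomogeneous (χ : Finset α → C) (k : ℕ) (B : Finset α) : Prop :=
  ∃ c, ∀ s ⊆ B, s.card = k → χ s = c

/-- A finite set in which the colour of a `(k + 1)`-element subset depends only on its least
element: the intermediate notion in the inductive proof of Ramsey's theorem. -/
def IsMinHomogeneous (χ : Finset α → C) (k : ℕ) (B : Finset α) : Prop :=
  ∃ c : α → C, ∀ x ∈ B, ∀ s ⊆ B, s.card = k → (∀ y ∈ s, x < y) → χ (insert x s) = c x

theorem IsMinHomogeneous.insert (hB : IsMinHomogeneous χ k B) (hx : ∀ y ∈ B, x < y)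
    (hxB : IsHomogeneous (fun s ↦ χ (insert x s)) k B) :
    IsMinHomogeneous χ k (insert x B) := by
  obtain ⟨c, hc⟩ := hB
  obtain ⟨c₀, hc₀⟩ := hxB
  refine ⟨Function.update c x c₀, fun y hy s hs hsk hys ↦ ?_⟩
  have hsB : s ⊆ B := fun z hz ↦ by
    have := hys z hz
    grind
  obtain rfl | hyB := Finset.mem_insert.1 hy
  · rw [Function.update_self]
    exact hc₀ s hsB hsk
  · rw [Function.update_of_ne (hx y hyB).ne', hc y hyB s hsB hsk hys]

theorem IsMinHomogeneous.exists_isHomogeneous [Finite C] (hB : IsMinHomogeneous χ k B)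
    (hcard : Nat.card C * n ≤ B.card) :
    ∃ B' ⊆ B, B'.card = n ∧ IsHomogeneous χ (k + 1) B' := by
  classical
  cases nonempty_fintype C
  obtain ⟨c, hc⟩ := hB
  obtain ⟨c₀, -, hc₀⟩ := Finset.exists_le_card_fiber_of_mul_le_card_of_maps_to
    (f := c) (fun _ _ ↦ Finset.mem_univ _) ⟨χ ∅, Finset.mem_univ _⟩
    (by rwa [Finset.card_univ, ← Nat.card_eq_fintype_card])
  obtain ⟨B', hB', hB'n⟩ := Finset.exists_subset_card_eq hc₀
  refine ⟨B', hB'.trans (Finset.filter_subset _ _), hB'n, c₀, fun s hs hsk ↦ ?_⟩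
  have hne : s.Nonempty := Finset.card_pos.1 (by lia)
  have hB'c {y : α} (hy : y ∈ s) : y ∈ B ∧ c y = c₀ := Finset.mem_filter.1 (hB' (hs hy))
  have hmin := s.min'_mem hne
  calc χ s = χ (Insert.insert (s.min' hne) (s.erase (s.min' hne))) := by
        rw [Finset.insert_erase hmin]
    _ = c (s.min' hne) := hc _ (hB'c hmin).1 _ (fun y hy ↦ (hB'c (Finset.mem_of_mem_erase hy)).1)
        (by rw [Finset.card_erase_of_mem hmin, hsk, Nat.add_sub_cancel])
        fun y hy ↦ s.min'_lt_of_mem_erase_min' hne hy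
    _ = c₀ := (hB'c hmin).2

end Ramsey

section RamseyTheorem

universe w

theorem exists_isMinHomogeneous {C : Type*} {k : ℕ}
    (hk : ∀ n, ∃ N, ∀ {α : Type w} [LinearOrder α] (χ : Finset α → C) (A : Finset α),
      N ≤ A.card → ∃ B ⊆ A, B.card = n ∧ IsHomogeneous χ k B) (n : ℕ) :
    ∃ N, ∀ {α : Type w} [LinearOrder α] (χ : Finset α → C) (A : Finset α),
      N ≤ A.card → ∃ B ⊆ A, B.card = n ∧ IsMinHomogeneous χ k B := by
  induction n with
  | zero =>
    exact ⟨0, fun χ A _ ↦ ⟨∅, A.empty_subset, rfl, fun _ ↦ χ ∅, by simp⟩⟩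
  | succ n ih =>
    obtain ⟨N₁, hN₁⟩ := ih
    obtain ⟨N₂, hN₂⟩ := hk N₁
    refine ⟨N₂ + 1, fun χ A hA ↦ ?_⟩
    have hne : A.Nonempty := Finset.card_pos.1 (by lia)
    set x := A.min' hne
    have hxA : x ∈ A := A.min'_mem hne
    obtain ⟨A', hA', hA'card, c, hc⟩ := hN₂ (fun s ↦ χ (insert x s)) (A.erase x)
      (by rw [Finset.card_erase_of_mem hxA]; lia)
    obtain ⟨B, hBA', hBcard, hB⟩ := hN₁ χ A' hA'card.ge
    have hBA : B ⊆ A.erase x := hBA'.trans hA'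
    have hx : ∀ y ∈ B, x < y := fun y hy ↦ A.min'_lt_of_mem_erase_min' hne (hBA hy)
    refine ⟨insert x B, Finset.insert_subset hxA (hBA.trans (A.erase_subset x)), ?_,
      hB.insert hx ⟨c, fun s hs ↦ hc s (hs.trans hBA')⟩⟩
    rw [Finset.card_insert_of_notMem fun hxB ↦ (hx x hxB).false, hBcard]

theorem exists_isHomogeneous (C : Type*) [Finite C] (k n : ℕ) :
    ∃ N, ∀ {α : Type w} [LinearOrder α] (χ : Finset α → C) (A : Finset α),
      N ≤ A.card → ∃ B ⊆ A, B.card = n ∧ IsHomogeneous χ k B := by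
  induction k generalizing n with
  | zero =>
    refine ⟨n, fun χ A hA ↦ ?_⟩
    obtain ⟨B, hBA, hB⟩ := Finset.exists_subset_card_eq hA
    exact ⟨B, hBA, hB, χ ∅, fun s _ hs ↦ by rw [Finset.card_eq_zero.1 hs]⟩
  | succ k ih =>
    obtain ⟨N, hN⟩ := exists_isMinHomogeneous ih (Nat.card C * n)
    refine ⟨N, fun χ A hA ↦ ?_⟩
    obtain ⟨B, hBA, hBcard, hB⟩ := hN χ A hA
    obtain ⟨B', hB'B, hB'⟩ := hB.exists_isHomogeneous hBcard.ge
    exact ⟨B', hB'B.trans hBA, hB'⟩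

theorem exists_orderEmbedding_homogeneous (κ ν C : Type*) [LinearOrder κ] [Finite κ]
    [LinearOrder ν] [Finite ν] [Finite C] :
    ∃ n, ∀ χ : (κ ↪o Fin n) → C, ∃ g : ν ↪o Fin n, ∀ i j : κ ↪o ν,
      χ (i.trans g) = χ (j.trans g) := by
  cases nonempty_fintype κ
  cases nonempty_fintype ν
  obtain ⟨n, hn⟩ := exists_isHomogeneous (C → Prop) (Fintype.card κ) (Fintype.card ν)
  refine ⟨n, fun χ ↦ ?_⟩
  obtain ⟨B, -, hBcard, c, hc⟩ :=
    hn (fun s r ↦ ∃ i : κ ↪o Fin n, Finset.univ.map i.toEmbedding = s ∧ χ i = r) Finset.univ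
      (by simp)
  let g : ν ↪o Fin n :=
    (Fintype.orderIsoFinOfCardEq ν rfl).symm.toOrderEmbedding.trans (B.orderEmbOfFin hBcard)
  have colour_eq (i : κ ↪o ν) :
      (fun r ↦ ∃ j, Finset.univ.map j.toEmbedding = Finset.univ.map (i.trans g).toEmbedding ∧
        χ j = r) = c := by
    refine hc _ (fun x hx ↦ ?_) (by simp)
    obtain ⟨t, -, rfl⟩ := Finset.mem_map.1 hx
    exact B.orderEmbOfFin_mem hBcard _
  refine ⟨g, fun i j ↦ ?_⟩
  obtain ⟨i', hi', hχ⟩ :=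
    (congrFun ((colour_eq i).trans (colour_eq j).symm) (χ (i.trans g))).mp ⟨_, rfl, rfl⟩
  have hij : i' = j.trans g := OrderEmbedding.range_inj.1 <| by
    simpa using congrArg ((↑) : Finset (Fin n) → Set (Fin n)) hi'
  rw [← hχ, hij]

end RamseyTheorem

section VCDimension

variable {X X' A A' ι κ : Type*} {R : X → A → Prop} {K K' : ℕ}

/-- The subset `{i | S i}` of the index set is cut out on the family `x` by some `R · a`.
Subsets are encoded as predicates, so that they can be updated pointwise. -/
def IsTrace (R : X → A → Prop) (x : ι → X) (S : ι → Prop) : Prop :=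
  ∃ a, ∀ i, R (x i) a ↔ S i

/-- The family `x` is shattered by the sets `R · a`. -/
def Shatters (R : X → A → Prop) (x : ι → X) : Prop :=
  ∀ S, IsTrace R x S

/-- The sets `R · a` have VC-dimension less than `K`. -/
def VCDimLT (R : X → A → Prop) (K : ℕ) : Prop :=
  ∀ x : Fin K → X, ¬ Shatters R x

theorem Shatters.comp_injective {x : ι → X} (h : Shatters R x) {g : κ → ι}
    (hg : Function.Injective g) : Shatters R (x ∘ g) := fun S ↦ by
  obtain ⟨S', rfl⟩ := hg.surjective_comp_right S
  obtain ⟨a, ha⟩ := h S'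
  exact ⟨a, fun t ↦ ha (g t)⟩

theorem VCDimLT.mono (h : VCDimLT R K) (hK : K ≤ K') : VCDimLT R K' :=
  fun _ hx ↦ h _ (hx.comp_injective (Fin.castLE_injective hK))

theorem VCDimLT.of_subsingleton [Subsingleton A] : VCDimLT R 1 := fun x hx ↦ by
  obtain ⟨a, ha⟩ := hx fun _ ↦ True
  obtain ⟨a', ha'⟩ := hx fun _ ↦ False
  exact (ha' 0).1 (Subsingleton.elim a a' ▸ (ha 0).2 trivial)

theorem VCDimLT.comp (h : VCDimLT R K) (f : X' → X) (g : A' → A) :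
    VCDimLT (fun x a ↦ R (f x) (g a)) K := fun x hx ↦
  h (f ∘ x) fun S ↦ (hx S).imp' g fun _ ha ↦ ha

/-- The dual shatter function: `2 ^ K` points indexed by the subsets of `Fin K` are separated
in all ways by the `K` parameters cutting out the sets of subsets that contain `i`. -/
theorem VCDimLT.swap (h : VCDimLT R K) : VCDimLT (fun a x ↦ R x a) (2 ^ K) := fun x hx ↦ by
  classical
  let e : (Fin K → Prop) ≃ Fin (2 ^ K) := Fintype.equivFinOfCardEq (by simp)
  choose y hy using fun i : Fin K ↦ hx fun p ↦ e.symm p i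
  refine h y fun S ↦ ⟨x (e S), fun i ↦ ?_⟩
  simpa using hy i (e S)

theorem not_vcDimLT_iff [Nonempty X] :
    ¬ VCDimLT R K ↔ ∃ (x : ℕ → X) (a : Set ℕ → A), ∀ i < K, ∀ S, R (x i) (a S) ↔ i ∈ S := by
  constructor
  · intro h
    obtain ⟨x, hx⟩ := not_forall_not.1 h
    choose a ha using hx
    refine ⟨fun i ↦ if hi : i < K then x ⟨i, hi⟩ else Classical.arbitrary X,
      fun S ↦ a fun t ↦ (t : ℕ) ∈ S, fun i hi S ↦ ?_⟩
    simpa [hi] using ha (fun t ↦ (t : ℕ) ∈ S) ⟨i, hi⟩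
  · rintro ⟨x, a, hxa⟩ h
    refine h (fun t ↦ x t) fun S ↦ ⟨a {i | ∃ hi : i < K, S ⟨i, hi⟩}, fun t ↦ ?_⟩
    simp [hxa t t.isLt]

end VCDimension

section Indistinguishability

variable {A X ι : Type*}

theorem eq_of_forall_update_eq {β γ : Type*} [DecidableEq ι] [Finite ι] (f : (ι → β) → γ)
    (h : ∀ x i b, f (Function.update x i b) = f x) (x y : ι → β) : f x = f y := by
  cases nonempty_fintype ι
  have key (s : Finset ι) : f (s.piecewise x y) = f y := by
    induction s using Finset.induction_on with
    | empty => rw [Finset.piecewise_empty]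
    | insert i s _ ih => rw [Finset.piecewise_insert, h, ih]
  simpa using key Finset.univ

theorem exists_iff_of_not_iff {β : Type*} {P : β → Prop} {b b' : β} (h : ¬ (P b ↔ P b'))
    (q : Prop) : ∃ e, P e ↔ q := by
  by_cases hq : q <;> by_cases hb : P b
  · exact ⟨b, by tauto⟩
  · exact ⟨b', by tauto⟩
  · exact ⟨b', by tauto⟩
  · exact ⟨b, by tauto⟩

/-- If `a` told the two sides of coordinate `l` apart, then `a` would cut out any prescribed
subset of the `l`-th block, once the sides within that block are chosen accordingly. As traces do
not depend on the choice of sides, the block itself would be shattered. -/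
theorem indistinguishable_sides [DecidableEq ι] [Finite ι] {K : ℕ} {Φ : (ι → X) → A → Prop}
    (hΦ : ∀ d l, VCDimLT (fun x a ↦ Φ (Function.update d l x) a) (K + 1))
    {B : ι → Fin (K + 1) → Prop → X}
    (hB : ∀ l S (e e' : ι → Fin (K + 1) → Prop),
      IsTrace (fun x a ↦ Φ (Function.update (fun t ↦ B t 0 (e t 0)) l x) a)
        (fun u ↦ B l u (e l u)) S →
      IsTrace (fun x a ↦ Φ (Function.update (fun t ↦ B t 0 (e' t 0)) l x) a)
        (fun u ↦ B l u (e' l u)) S)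
    {a : A} (ha : ∀ (η : ι → Prop) (s s' : ι → Fin (K + 1)),
      Φ (fun t ↦ B t (s t) (η t)) a ↔ Φ (fun t ↦ B t (s' t) (η t)) a)
    (η η' : ι → Prop) :
    Φ (fun t ↦ B t 0 (η t)) a ↔ Φ (fun t ↦ B t 0 (η' t)) a := by
  refine iff_of_eq <| eq_of_forall_update_eq (fun η ↦ Φ (fun t ↦ B t 0 (η t)) a)
    (fun η l e ↦ propext ?_) η η'
  by_contra hne
  have distinguished : ¬ (Φ (fun t ↦ B t 0 (Function.update η l e t)) a ↔
      Φ (fun t ↦ B t 0 (Function.update η l (η l) t)) a) := by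
    rwa [Function.update_eq_self]
  choose side hside using exists_iff_of_not_iff
    (P := fun e ↦ Φ (fun t ↦ B t 0 (Function.update η l e t)) a) distinguished
  refine hΦ (fun t ↦ B t 0 False) l (fun u ↦ B l u False) fun S ↦
    hB l S (Function.update (fun t _ ↦ η t) l fun u ↦ side (S u)) (fun _ _ ↦ False)
      ⟨a, fun u ↦ ?_⟩
  rw [← hside (S u), ha _ (fun _ ↦ 0) (Function.update (fun _ ↦ 0) l u)]
  refine iff_of_eq (congrArg (Φ · a) (funext fun t ↦ ?_))
  obtain rfl | ht := eq_or_ne t l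
  · simp
  · simp [ht]

/-- The order embedding `i ↦ (f i, g i)` into the lexicographic product. -/
def lexGraphEmbedding {α β γ : Type*} [LinearOrder α] [PartialOrder β] [Preorder γ]
    (f : α ↪o β) (g : α → γ) : α ↪o β ×ₗ γ :=
  OrderEmbedding.ofStrictMono (fun i ↦ toLex (f i, g i)) fun _ _ hij ↦
    Prod.Lex.toLex_lt_toLex.2 (Or.inl (f.strictMono hij))

theorem exists_indistinguishable_pairs (σ ι : Type*) [Finite σ] [LinearOrder ι] [Finite ι]
    (K : ℕ) :
    ∃ n m : ℕ, ∀ {A X : Type*} (Φ : σ → (ι → X) → A → Prop),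
      (∀ s d l, VCDimLT (fun x a ↦ Φ s (Function.update d l x) a) K) →
      ∀ x : Fin n → X, ∃ g : Fin m ×ₗ Prop ↪o Fin n, ∀ a, ∃ j : ι ↪o Fin m, ∀ s (η η' : ι → Prop),
        Φ s (fun t ↦ x (g (toLex (j t, η t)))) a ↔ Φ s (fun t ↦ x (g (toLex (j t, η' t)))) a := by
  have : Finite (ι ×ₗ Fin (K + 1)) := inferInstanceAs (Finite (ι × Fin (K + 1)))
  obtain ⟨m, hm⟩ := exists_orderEmbedding_homogeneous ι (ι ×ₗ Fin (K + 1))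
    (σ → (ι → Prop) → Prop)
  have : Finite (Fin m ×ₗ Prop) := inferInstanceAs (Finite (Fin m × Prop))
  obtain ⟨n, hn⟩ := exists_orderEmbedding_homogeneous (ι ×ₗ Fin (K + 1)) (Fin m ×ₗ Prop)
    (σ → ι → (Fin (K + 1) → Prop) → Prop)
  refine ⟨n, m, fun Φ hΦ x ↦ ?_⟩
  obtain ⟨g, hg⟩ := hn fun i s l S ↦
    IsTrace (fun y a ↦ Φ s (Function.update (fun t ↦ x (i (toLex (t, 0)))) l y) a)
      (fun u ↦ x (i (toLex (l, u)))) S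
  refine ⟨g, fun a ↦ ?_⟩
  obtain ⟨h, hh⟩ := hm fun i s η ↦ Φ s (fun t ↦ x (g (toLex (i t, η t)))) a
  refine ⟨(lexGraphEmbedding (RelEmbedding.refl _) fun _ ↦ 0).trans h, fun s ↦
    indistinguishable_sides (fun d l ↦ (hΦ s d l).mono K.le_succ)
      (B := fun t u e ↦ x (g (toLex (h (toLex (t, u)), e)))) (fun l S e e' ↦ ?_)
      fun η r r' ↦ ?_⟩
  · exact (congrFun₃ (hg (lexGraphEmbedding h fun p ↦ e (ofLex p).1 (ofLex p).2)
      (lexGraphEmbedding h fun p ↦ e' (ofLex p).1 (ofLex p).2)) s l S).mp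
  · exact iff_of_eq (congrFun₂ (hh (lexGraphEmbedding (RelEmbedding.refl _) r)
      (lexGraphEmbedding (RelEmbedding.refl _) r')) s η)

theorem exists_vcDimLT_prod (N K : ℕ) :
    ∃ n, ∀ {X A A' : Type*} (R : X → A → A' → Prop),
      (∀ a, VCDimLT (fun x a' ↦ R x a a') N) →
      (∀ S d l, VCDimLT
        (fun y a ↦ IsTrace (fun x a' ↦ R x a a') (Function.update d l y : Fin N → X) S) K) →
      VCDimLT (fun x (p : A × A') ↦ R x p.1 p.2) n := by
  obtain ⟨n, m, hnm⟩ := exists_indistinguishable_pairs (Fin N → Prop) (Fin N) K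
  refine ⟨n, fun R hN hK x hx ↦ ?_⟩
  obtain ⟨g, hg⟩ := hnm (fun S y a ↦ IsTrace (fun x a' ↦ R x a a') y S) hK x
  obtain ⟨⟨a, a'⟩, haa'⟩ := hx.comp_injective g.injective fun p ↦ (ofLex p).2
  obtain ⟨j, hj⟩ := hg a
  refine hN a (fun t ↦ x (g (toLex (j t, True)))) fun S ↦ ?_
  exact (hj S S fun _ ↦ True).1 ⟨a', fun t ↦ haa' (toLex (j t, S t))⟩

end Indistinguishability

section UniformNIP

variable {L : FirstOrder.Language.{u, v}} {M : Type*} [L.Structure M] {α α' β β' γ γ' : Type*}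

/-- The relations `φ(x̄; ȳ; c̄)` on `M` have bounded VC-dimension, uniformly in the parameters `c̄`:
the form that NIP takes in a single model. -/
def IsUniformlyNIP (M : Type*) [L.Structure M] (φ : L.Formula ((α ⊕ β) ⊕ γ)) : Prop :=
  ∃ K, ∀ c : γ → M,
    VCDimLT (fun (a : α → M) (b : β → M) ↦ φ.Realize (Sum.elim (Sum.elim a b) c)) K

/-- Every formula `φ(x̄; ȳ; c̄)` with `x̄` indexed by `α` and `ȳ` by `β` is uniformly NIP in `M`. -/
def AllUniformlyNIP (L : FirstOrder.Language.{u, v}) (M : Type*) [L.Structure M]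
    (α β : Type*) : Prop :=
  ∀ (k : ℕ) (φ : L.Formula ((α ⊕ β) ⊕ Fin k)), IsUniformlyNIP M φ

theorem IsUniformlyNIP.of_comp {φ : L.Formula ((α ⊕ β) ⊕ γ)} {φ' : L.Formula ((α' ⊕ β') ⊕ γ')}
    (hφ : IsUniformlyNIP M φ) (f : (α' → M) → α → M) (g : (β' → M) → β → M)
    (p : (γ' → M) → γ → M)
    (h : ∀ a b c, φ.Realize (Sum.elim (Sum.elim (f a) (g b)) (p c)) ↔
      φ'.Realize (Sum.elim (Sum.elim a b) c)) :
    IsUniformlyNIP M φ' := by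
  obtain ⟨K, hK⟩ := hφ
  exact ⟨K, fun c ↦ by simpa only [h] using (hK (p c)).comp f g⟩

namespace AllUniformlyNIP

theorem isUniformlyNIP [Finite γ] (h : AllUniformlyNIP L M α β)
    (φ : L.Formula ((α ⊕ β) ⊕ γ)) : IsUniformlyNIP M φ := by
  obtain ⟨k, ⟨e⟩⟩ := Finite.exists_equiv_fin γ
  refine (h k (φ.relabel (Sum.map id e))).of_comp id id (· ∘ e.symm) fun a b c ↦ ?_
  simp [Formula.realize_relabel, Sum.elim_comp_map, Function.comp_assoc]

theorem of_equiv_right (h : AllUniformlyNIP L M α β) (e : β ≃ β') : AllUniformlyNIP L M α β' :=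
  fun k φ ↦ by
    refine (h k (φ.relabel (Sum.map (Sum.map id e.symm) id))).of_comp id (· ∘ e) id fun a b c ↦ ?_
    simp [Formula.realize_relabel, Sum.elim_comp_map, Function.comp_assoc]

theorem of_isEmpty_right [IsEmpty β] : AllUniformlyNIP L M α β :=
  fun _ _ ↦ ⟨1, fun _ ↦ .of_subsingleton⟩

theorem swap (h : AllUniformlyNIP L M α β) : AllUniformlyNIP L M β α := fun k φ ↦ by
  obtain ⟨K, hK⟩ := h k (φ.relabel (Sum.map Sum.swap id))
  refine ⟨2 ^ K, fun c ↦ ?_⟩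
  simpa [Formula.realize_relabel, Sum.elim_comp_map, Sum.elim_swap] using (hK c).swap

end AllUniformlyNIP

/-- The formula `∃ ȳ, ⋀ᵢ (ψᵢ(·, ȳ) ↔ S i)`. -/
noncomputable def traceFormula {ι : Type*} [Finite ι] [Finite β] (ψ : ι → L.Formula (γ ⊕ β))
    (S : ι → Prop) : L.Formula γ :=
  open scoped Classical in (Formula.iInf fun i ↦ if S i then ψ i else ∼(ψ i)).iExs β

theorem realize_traceFormula {ι : Type*} [Finite ι] [Finite β] {ψ : ι → L.Formula (γ ⊕ β)}
    {S : ι → Prop} {v : γ → M} :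
    (traceFormula ψ S).Realize v ↔
      IsTrace (fun i (b : β → M) ↦ (ψ i).Realize (Sum.elim v b)) id S := by
  classical
  simp only [traceFormula, Formula.realize_iExs, Formula.realize_iInf, IsTrace, id_eq]
  refine exists_congr fun b ↦ forall_congr' fun i ↦ ?_
  split_ifs with hi <;> simp [hi]

theorem AllUniformlyNIP.exists_vcDimLT_isTrace [Finite α] [Finite β']
    (h : AllUniformlyNIP L M α β) (φ : L.Formula ((α ⊕ (β ⊕ β')) ⊕ γ)) [Finite γ] (N : ℕ) :
    ∃ K, ∀ (c : γ → M) (S : Fin N → Prop) (d : Fin N → α → M) (l : Fin N),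
      VCDimLT (fun y b ↦ IsTrace
        (fun a b' ↦ φ.Realize (Sum.elim (Sum.elim a (Sum.elim b b')) c))
        (Function.update d l y) S) K := by
  classical
  let ψ (l t : Fin N) : L.Formula (((α ⊕ β) ⊕ ((Fin N × α) ⊕ γ)) ⊕ β') := φ.relabel <|
    Sum.elim
      (Sum.elim
        (if t = l then Sum.inl ∘ Sum.inl ∘ Sum.inl else Sum.inl ∘ Sum.inr ∘ Sum.inl ∘ Prod.mk t)
        (Sum.elim (Sum.inl ∘ Sum.inl ∘ Sum.inr) Sum.inr))
      (Sum.inl ∘ Sum.inr ∘ Sum.inr)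
  choose K₀ hK₀ using fun p : (Fin N → Prop) × Fin N ↦
    h.isUniformlyNIP (traceFormula (ψ p.2) p.1)
  obtain ⟨K, hK⟩ := Finite.exists_le K₀
  refine ⟨K, fun c S d l ↦ ?_⟩
  convert (hK₀ (S, l) (Sum.elim (fun p ↦ d p.1 p.2) c)).mono (hK (S, l)) using 3 with y b
  simp only [realize_traceFormula, IsTrace, id_eq]
  refine exists_congr fun b' ↦ forall_congr' fun t ↦ ?_
  have hd : (fun p : Fin N × α ↦ d p.1 p.2) ∘ Prod.mk t = d t := rfl
  obtain rfl | ht := eq_or_ne t l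
  · simp [ψ, Formula.realize_relabel, Sum.comp_elim, ← Function.comp_assoc]
  · simp [ψ, ht, hd, Formula.realize_relabel, Sum.comp_elim, ← Function.comp_assoc]

theorem AllUniformlyNIP.sum_right [Finite α] [Finite β] [Finite β']
    (h : AllUniformlyNIP L M α β) (h' : AllUniformlyNIP L M α β') :
    AllUniformlyNIP L M α (β ⊕ β') := fun k φ ↦ by
  obtain ⟨N, hN⟩ := h'.isUniformlyNIP (γ := β ⊕ Fin k) <| φ.relabel <|
    Sum.elim (Sum.elim (Sum.inl ∘ Sum.inl) (Sum.elim (Sum.inr ∘ Sum.inl) (Sum.inl ∘ Sum.inr)))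
      (Sum.inr ∘ Sum.inr)
  obtain ⟨K, hK⟩ := h.exists_vcDimLT_isTrace φ N
  obtain ⟨n, hn⟩ := exists_vcDimLT_prod N K
  refine ⟨n, fun c ↦ ?_⟩
  have hprod := hn (fun (a : α → M) b b' ↦ φ.Realize (Sum.elim (Sum.elim a (Sum.elim b b')) c))
    (fun b ↦ ?_) (hK c)
  · simpa using hprod.comp id fun b ↦ (b ∘ Sum.inl, b ∘ Sum.inr)
  · simpa [Formula.realize_relabel, Sum.comp_elim, ← Function.comp_assoc] using hN (Sum.elim b c)

theorem AllUniformlyNIP.of_finite_right [Finite α] [Finite β]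
    (h : AllUniformlyNIP L M α (Fin 1)) : AllUniformlyNIP L M α β := by
  induction β using Finite.induction_empty_option with
  | of_equiv e hβ => exact hβ.of_equiv_right e
  | h_empty => exact .of_isEmpty_right
  | h_option hβ =>
    exact (hβ.sum_right (h.of_equiv_right (Equiv.ofUnique _ Unit))).of_equiv_right
      (Equiv.optionEquivSumPUnit.{0} _).symm

theorem AllUniformlyNIP.of_finite [Finite α] [Finite β]
    (h : AllUniformlyNIP L M (Fin 1) (Fin 1)) : AllUniformlyNIP L M α β :=
  h.of_finite_right.swap.of_finite_right.swap

end UniformNIP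

section Ultrapower

variable {L : FirstOrder.Language.{u, v}}

theorem ultrapower_models {M ι : Type*} [L.Structure M] [Nonempty M] (U : Ultrafilter ι)
    {T : L.Theory} (hM : M ⊨ T) : (U : Filter ι).Product (fun _ ↦ M) ⊨ T :=
  ⟨fun ψ hψ ↦ by
    rw [Ultraproduct.sentence_realize]
    exact .of_forall fun _ ↦ hM.realize_of_mem ψ hψ⟩

/-- Parameters witnessing larger and larger VC-dimension amalgamate in an ultrapower. -/
theorem exists_hasIPWithParams_of_not_isUniformlyNIP {M : Type (max u v)} [L.Structure M]
    [Nonempty M] {α β γ : Type*} {φ : L.Formula ((α ⊕ β) ⊕ γ)} (hφ : ¬ IsUniformlyNIP M φ) :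
    ∃ c : γ → (Filter.hyperfilter ℕ : Filter ℕ).Product (fun _ ↦ M), HasIPWithParams φ c := by
  simp only [IsUniformlyNIP, not_exists, not_forall, not_vcDimLT_iff] at hφ
  choose c a b hab using hφ
  let N := (Filter.hyperfilter ℕ : Filter ℕ).Product fun _ ↦ M
  let q (x : ℕ → M) : N := x
  refine ⟨fun j ↦ q (c · j), ⟨N, .refl L N⟩, fun i j ↦ q (a · i j), fun S j ↦ q (b · S j),
    fun i S ↦ ?_⟩
  have realize_iff (x : α → ℕ → M) (y : β → ℕ → M) (z : γ → ℕ → M) :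
      φ.Realize (Sum.elim (Sum.elim (q ∘ x) (q ∘ y)) (q ∘ z)) ↔ ∀ᶠ K in Filter.hyperfilter ℕ,
        φ.Realize (Sum.elim (Sum.elim ((· K) ∘ x) ((· K) ∘ y)) ((· K) ∘ z)) := by
    simp only [← Sum.comp_elim]
    exact Ultraproduct.realize_formula_cast φ _
  calc _ ↔ ∀ᶠ K in Filter.hyperfilter ℕ, φ.Realize (Sum.elim (Sum.elim (a K i) (b K S)) (c K)) :=
        realize_iff (fun j K ↦ a K i j) (fun j K ↦ b K S j) fun j K ↦ c K j
    _ ↔ ∀ᶠ _ in (Filter.hyperfilter ℕ : Filter ℕ), i ∈ S :=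
        Filter.eventually_congr <| (Filter.eventually_gt_atTop i).filter_mono
          Nat.hyperfilter_le_atTop |>.mono fun K hK ↦ hab K i hK S
    _ ↔ i ∈ S := Filter.eventually_const

end Ultrapower

theorem nip_of_two_single_variables_with_params_general {L : FirstOrder.Language.{u, v}}
    (T : L.Theory)
    (h : ∀ (M : Type (max u v)) [L.Structure M] [Nonempty M], M ⊨ T →
      ∀ (k : ℕ) (φ : L.Formula ((Fin 1 ⊕ Fin 1) ⊕ Fin k)) (c : Fin k → M),
        ¬ HasIPWithParams φ c)
    {α β : Type*} [Finite α] [Finite β] (φ : L.Formula (α ⊕ β)) : ¬ FormulaHasIP T φ := by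
  rintro ⟨N, a, b, hab⟩
  have single : AllUniformlyNIP L N (Fin 1) (Fin 1) := fun k ψ ↦ by
    by_contra hψ
    obtain ⟨c, hc⟩ := exists_hasIPWithParams_of_not_isUniformlyNIP hψ
    exact h _ (ultrapower_models _ N.is_model) k ψ c hc
  obtain ⟨K, hK⟩ := single.of_finite (α := α) (β := β) 0 (φ.relabel Sum.inl)
  refine not_vcDimLT_iff.2 ⟨a, b, fun i _ S ↦ ?_⟩ (hK default)
  simpa [Formula.realize_relabel] using hab i S

/-- If, in every model `M` of the complete theory `T`, every formula `φ(x; y)` in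
two single variables with parameters from `M` is NIP, then `T` is NIP: no parameter-free
formula `φ(x̄; ȳ)` has the independence property. -/
theorem nip_of_two_single_variables_with_params {L : FirstOrder.Language.{u, v}}
    (T : L.Theory) (hT : T.IsComplete)
    (h : ∀ (M : Type (max u v)) [L.Structure M] [Nonempty M], M ⊨ T →
      ∀ (k : ℕ) (φ : L.Formula ((Fin 1 ⊕ Fin 1) ⊕ Fin k)) (c : Fin k → M),
        ¬ HasIPWithParams φ c) :
    ∀ (m n : ℕ) (φ : L.Formula (Fin m ⊕ Fin n)), ¬ FormulaHasIP T φ :=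
  fun _ _ φ ↦ nip_of_two_single_variables_with_params_general T h φ
end

section
/- Let T be a complete first-order theory and let φ(x̄;ȳ) be a formula without parameters that has the order property, where the tuple ȳ has length at least 2. Then there exist a model M of T and a formula ψ(x̄;ȳ') with parameters from M such that |ȳ'| < |ȳ| and ψ(x̄;ȳ') has the order property. -/
open FirstOrder FirstOrder.Language

universe u v

/-!
By compactness index the sequences for `φ(x̄; z̄, ȳ)` by `ℝ`, as `ā_q` and `z̄_r ȳ_r`, and let
`χ_r(x̄; z̄)` be `φ(x̄; z̄, ȳ_r)`. If trees of every height split some fibre `φ(x̄; z̄, c̄)`, long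
half graphs appear in the fibres, and by compactness a single fibre has the order property. If
not, the local 2-ranks of the `χ_r` are uniformly bounded, so the `χ_r`-type of `z̄_r` over
`{ā_q : q ∈ ℚ}` is defined by a finite part of it and the rank of that part. There are only
countably many such data, so infinitely many `r` share them, and for those `r` one formula
`ψ(x̄; ȳ)` with parameters from `{ā_q : q ∈ ℚ}` satisfies `ψ(ā_q; ȳ_r) ↔ q < r`.
-/

open Filter Set Topology

section Combinatorics

variable {X Z : Type*}

/-- `HasSplittingTree χ h P D` says that some full binary tree of height `h`, with nodes in `P`,
splits `D`: each node divides the part of `D` that reaches it by the truth value of `χ`, and all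
`2 ^ h` leaves are reached. Equivalently, Shelah's local 2-rank of `D` is at least `h`. -/
def HasSplittingTree (χ : X → Z → Prop) : ℕ → Set X → Set Z → Prop
  | 0, _, D => D.Nonempty
  | h + 1, P, D => ∃ x ∈ P,
      HasSplittingTree χ h P {z ∈ D | χ x z} ∧ HasSplittingTree χ h P {z ∈ D | ¬ χ x z}

namespace HasSplittingTree

variable {χ : X → Z → Prop} {P P' Q : Set X} {D D' : Set Z}

theorem mono {h : ℕ} (H : HasSplittingTree χ h P D) (hP : P ⊆ P') (hD : D ⊆ D') :
    HasSplittingTree χ h P' D' := by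
  induction h generalizing D D' with
  | zero => exact Nonempty.mono hD H
  | succ h ih =>
    obtain ⟨x, hx, hpos, hneg⟩ := H
    exact ⟨x, hP hx, ih hpos fun z hz => ⟨hD hz.1, hz.2⟩, ih hneg fun z hz => ⟨hD hz.1, hz.2⟩⟩

theorem nonempty {h : ℕ} (H : HasSplittingTree χ h P D) : D.Nonempty := by
  induction h generalizing D with
  | zero => exact H
  | succ h ih =>
    obtain ⟨_, _, hpos, _⟩ := H
    exact (ih hpos).mono (sep_subset _ _)

theorem of_union {h k : ℕ} (H : HasSplittingTree χ (h + k) (P ∪ Q) D) :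
    HasSplittingTree χ h P D ∨ HasSplittingTree χ k Q D := by
  induction hN : h + k generalizing h k D with
  | zero =>
    obtain ⟨rfl, rfl⟩ := Nat.add_eq_zero_iff.1 hN
    exact .inl H.nonempty
  | succ N ih =>
    obtain _ | h := h
    · exact .inl H.nonempty
    obtain _ | k := k
    · exact .inr H.nonempty
    rw [hN] at H
    obtain ⟨x, hx | hx, hpos, hneg⟩ := H
    · have split {E : Set Z} (HE : HasSplittingTree χ N (P ∪ Q) E) :=
        ih (h := h) (k := k + 1) (by rwa [show h + (k + 1) = N by omega]) (by omega)
      rcases split hpos with hpos | hpos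
      · rcases split hneg with hneg | hneg
        · exact .inl ⟨x, hx, hpos, hneg⟩
        · exact .inr (hneg.mono subset_rfl (sep_subset _ _))
      · exact .inr (hpos.mono subset_rfl (sep_subset _ _))
    · have split {E : Set Z} (HE : HasSplittingTree χ N (P ∪ Q) E) :=
        ih (h := h + 1) (k := k) (by rwa [show h + 1 + k = N by omega]) (by omega)
      rcases split hpos with hpos | hpos
      · exact .inl (hpos.mono subset_rfl (sep_subset _ _))
      · rcases split hneg with hneg | hneg
        · exact .inl (hneg.mono subset_rfl (sep_subset _ _))
        · exact .inr ⟨x, hx, hpos, hneg⟩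

end HasSplittingTree

/-- `HasLadder χ k P D` says that `P × D` contains a half graph of size `k` for `χ`: the order
property restricted to sequences of length `k`. -/
def HasLadder (χ : X → Z → Prop) (k : ℕ) (P : Set X) (D : Set Z) : Prop :=
  ∃ (x : Fin k → X) (z : Fin k → Z), (∀ i, x i ∈ P) ∧ (∀ j, z j ∈ D) ∧
    ∀ i j, χ (x i) (z j) ↔ i < j

namespace HasLadder

variable {χ : X → Z → Prop} {k : ℕ} {P P' : Set X} {D D' : Set Z}

theorem mono (H : HasLadder χ k P D) (hP : P ⊆ P') (hD : D ⊆ D') : HasLadder χ k P' D' := by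
  obtain ⟨x, z, hx, hz, hχ⟩ := H
  exact ⟨x, z, fun i => hP (hx i), fun j => hD (hz j), hχ⟩

theorem zero (χ : X → Z → Prop) (P : Set X) (D : Set Z) : HasLadder χ 0 P D :=
  ⟨Fin.elim0, Fin.elim0, fun i => i.elim0, fun i => i.elim0, fun i => i.elim0⟩

theorem cons (H : HasLadder χ k P D) {x : X} {z : Z} (hxz : ¬ χ x z) (hx : ∀ z' ∈ D, χ x z')
    (hz : ∀ x' ∈ P, ¬ χ x' z) : HasLadder χ (k + 1) (insert x P) (insert z D) := by
  obtain ⟨xs, zs, hxs, hzs, hχ⟩ := H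
  refine ⟨Fin.cons x xs, Fin.cons z zs, Fin.cases ?_ fun i => ?_, Fin.cases ?_ fun j => ?_,
    Fin.cases (Fin.cases ?_ fun j => ?_) fun i => Fin.cases ?_ fun j => ?_⟩
  · simp
  · simpa using .inr (hxs i)
  · simp
  · simpa using .inr (hzs j)
  · simpa using hxz
  · simpa using hx _ (hzs j)
  · simpa using hz _ (hxs i)
  · simpa using hχ i j

theorem of_not (H : HasLadder (fun x z => ¬ χ x z) (k + 1) P D) : HasLadder χ k P D := by
  obtain ⟨x, z, hx, hz, hχ⟩ := H
  refine ⟨fun i => x i.rev.castSucc, fun j => z j.rev.succ, fun _ => hx _, fun _ => hz _,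
    fun i j => ?_⟩
  refine not_iff_not.1 ((hχ _ _).trans ?_)
  rw [Fin.lt_def, Fin.lt_def]
  simp only [Fin.val_castSucc, Fin.val_succ, Fin.val_rev]
  omega

theorem map {X' Z' : Type*} {χ' : X' → Z' → Prop} (H : HasLadder χ k P D) (f : X → X')
    (g : Z → Z') (h : ∀ x ∈ P, ∀ z ∈ D, χ' (f x) (g z) ↔ χ x z) :
    HasLadder χ' k univ univ := by
  obtain ⟨x, z, hx, hz, hχ⟩ := H
  exact ⟨f ∘ x, g ∘ z, fun _ => mem_univ _, fun _ => mem_univ _,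
    fun i j => (h _ (hx i) _ (hz j)).trans (hχ i j)⟩

end HasLadder

-- A point `z` of the tree divides the nodes by the truth value of `χ · z`, and one of the two
-- classes carries a large subtree. On the side of its root `x` where `χ x` differs from the
-- constant value of `χ · z` on that class, the pair `(x, z)` extends the ladder found there.
theorem exists_height_hasLadder_or_hasLadder_not (X Z : Type*) (p q : ℕ) :
    ∃ h, ∀ (χ : X → Z → Prop) (P : Set X) (D : Set Z), HasSplittingTree χ h P D →
      HasLadder χ p P D ∨ HasLadder (fun x z => ¬ χ x z) q P D := by
  induction hN : p + q generalizing p q with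
  | zero =>
    obtain ⟨rfl, rfl⟩ := Nat.add_eq_zero_iff.1 hN
    exact ⟨0, fun χ P D _ => .inl (.zero χ P D)⟩
  | succ N ih =>
    obtain _ | p := p
    · exact ⟨0, fun χ P D _ => .inl (.zero χ P D)⟩
    obtain _ | q := q
    · exact ⟨0, fun χ P D _ => .inr (.zero _ P D)⟩
    obtain ⟨h₁, ih₁⟩ := ih (p + 1) q (by omega)
    obtain ⟨h₂, ih₂⟩ := ih p (q + 1) (by omega)
    refine ⟨(h₁ + 1) + (h₂ + 1), fun χ P D H => ?_⟩
    obtain ⟨z, hz⟩ := H.nonempty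
    have hP : P ⊆ {x ∈ P | χ x z} ∪ {x ∈ P | ¬ χ x z} := fun x hx =>
      (em (χ x z)).imp (⟨hx, ·⟩) (⟨hx, ·⟩)
    rcases (H.mono hP subset_rfl).of_union with ⟨x, hx, _, hneg⟩ | ⟨x, hx, hpos, _⟩
    · refine (ih₁ _ _ _ hneg).imp (·.mono (sep_subset _ _) (sep_subset _ _)) fun H' => ?_
      exact (H'.cons (not_not.2 hx.2) (fun _ hz' => hz'.2) fun _ hx' => not_not.2 hx'.2).mono
        (insert_subset hx.1 (sep_subset _ _)) (insert_subset hz (sep_subset _ _))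
    · refine (ih₂ _ _ _ hpos).imp (fun H' => ?_) (·.mono (sep_subset _ _) (sep_subset _ _))
      exact (H'.cons hx.2 (fun _ hz' => hz'.2) fun _ hx' => hx'.2).mono
        (insert_subset hx.1 (sep_subset _ _)) (insert_subset hz (sep_subset _ _))

theorem exists_height_hasLadder (X Z : Type*) (k : ℕ) :
    ∃ h, ∀ (χ : X → Z → Prop) (P : Set X) (D : Set Z),
      HasSplittingTree χ h P D → HasLadder χ k P D := by
  obtain ⟨h, hh⟩ := exists_height_hasLadder_or_hasLadder_not X Z k (k + 1)
  exact ⟨h, fun χ P D H => (hh χ P D H).elim id .of_not⟩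

/-- The solutions of the finite partial `χ`-type `p`, which holds pairs of a left argument of `χ`
and the truth value prescribed there. -/
def solutionSet (χ : X → Z → Prop) (p : Finset (X × Bool)) : Set Z :=
  {z | ∀ t ∈ p, χ t.1 z ↔ t.2 = true}

theorem solutionSet_insert [DecidableEq X] (χ : X → Z → Prop) (x : X) (s : Bool)
    (p : Finset (X × Bool)) :
    solutionSet χ (insert (x, s) p) = {z ∈ solutionSet χ p | χ x z ↔ s = true} := by
  ext z
  simp only [solutionSet, Finset.forall_mem_insert, mem_ofPred_eq, and_comm]

-- Definability of types in a stable relation: among the finite parts `p` of the type of `d` take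
-- one of minimal rank. Adding the true one of `χ (a i)` and its negation does not lower that
-- rank, so adding the false one does.
theorem exists_type_definition {I : Type*} [DecidableEq I] {χ : X → Z → Prop} {h : ℕ}
    (hχ : ¬ HasSplittingTree χ h univ univ) (a : I → X) (d : Z) :
    ∃ (R : ℕ) (p : Finset (I × Bool)), ∀ i, χ (a i) d ↔
      HasSplittingTree χ R univ (solutionSet (fun i => χ (a i)) (insert (i, true) p)) := by
  classical
  set S := solutionSet fun i => χ (a i)
  have hex : ∃ R p, d ∈ S p ∧ ¬ HasSplittingTree χ R univ (S p) :=
    ⟨h, ∅, by simp [S, solutionSet], fun H => hχ (H.mono subset_rfl (subset_univ _))⟩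
  obtain ⟨p, hd, hp⟩ := Nat.find_spec hex
  have hmin {R : ℕ} (hR : R < Nat.find hex) {p : Finset (I × Bool)} (hd : d ∈ S p) :
      HasSplittingTree χ R univ (S p) := by
    by_contra hc
    exact Nat.find_min hex hR ⟨p, hd, hc⟩
  rcases hR : Nat.find hex with _ | R
  · rw [hR] at hp
    exact absurd ⟨d, hd⟩ hp
  rw [hR] at hp hmin
  have mem_insert_iff (i : I) (s : Bool) : d ∈ S (insert (i, s) p) ↔ (χ (a i) d ↔ s = true) := by
    simp only [S, solutionSet_insert, mem_ofPred_eq]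
    exact and_iff_right hd
  refine ⟨R, p, fun i => ⟨fun hi => hmin R.lt_succ_self ((mem_insert_iff i true).2 (by simpa)),
    fun Hpos => ?_⟩⟩
  by_contra hi
  have Hneg := hmin R.lt_succ_self ((mem_insert_iff i false).2 (by simpa))
  simp only [S, solutionSet_insert, iff_true, Bool.false_eq_true, iff_false] at Hpos Hneg
  exact hp ⟨a i, mem_univ _, Hpos, Hneg⟩

theorem exists_infinite_common_type_definition {I J : Type*} [Countable I] [DecidableEq I]
    [Uncountable J] {χ : J → X → Z → Prop} {h : ℕ} (hχ : ∀ j, ¬ HasSplittingTree (χ j) h univ univ)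
    (a : I → X) (d : J → Z) :
    ∃ (R : ℕ) (p : Finset (I × Bool)), {j | ∀ i, χ j (a i) (d j) ↔ HasSplittingTree (χ j) R univ
      (solutionSet (fun i => χ j (a i)) (insert (i, true) p))}.Infinite := by
  choose R p hRp using fun j => exists_type_definition (hχ j) a (d j)
  obtain ⟨⟨R₀, p₀⟩, hfiber⟩ : ∃ t, ((fun j => (R j, p j)) ⁻¹' {t}).Infinite := by
    by_contra! hfin
    refine not_countable_univ (α := J) ?_
    rw [← preimage_univ (f := fun j => (R j, p j)), ← biUnion_preimage_singleton]
    exact (to_countable univ).biUnion fun t _ => (hfin t).countable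
  refine ⟨R₀, p₀, hfiber.mono fun j hj => ?_⟩
  obtain ⟨rfl, rfl⟩ := Prod.mk.inj hj
  exact hRp j

theorem hasLadder_ratCast_lt {K : Type*} [Field K] [LinearOrder K] [IsStrictOrderedRing K]
    [Archimedean K] {S : Set K} (hS : S.Infinite) (k : ℕ) :
    HasLadder (fun (q : ℚ) (r : K) => (q : K) < r) k univ S := by
  obtain ⟨t, htS, htk⟩ := hS.exists_subset_card_eq (k + 1)
  let r := t.orderEmbOfFin htk
  choose q hrq hqr using fun i : Fin k => exists_rat_btwn (r.strictMono i.castSucc_lt_succ)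
  refine ⟨q, fun j => r j.castSucc, fun _ => mem_univ _,
    fun j => htS (t.orderEmbOfFin_mem htk _), fun i j => ⟨fun h => ?_, fun h => ?_⟩⟩
  · exact Fin.castSucc_lt_castSucc_iff.1 (r.lt_iff_lt.1 ((hrq i).trans h))
  · exact (hqr i).trans_le (r.monotone (Fin.succ_le_castSucc_iff.2 h))

end Combinatorics

section Definability

variable {L : FirstOrder.Language.{u, v}} {M : Type*} [L.Structure M] {α β γ ζ : Type*}

/-- The binary relation on tuples which the formula `φ(x̄; z̄; c̄)` with parameters `c̄` defines. -/
def fiberRel (φ : L.Formula ((α ⊕ ζ) ⊕ β)) (c : β → M) (x : α → M) (z : ζ → M) : Prop :=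
  φ.Realize (Sum.elim (Sum.elim x z) c)

theorem definable_fiberRel (φ : L.Formula ((α ⊕ ζ) ⊕ β)) (x : α → γ) (z : ζ → γ) (c : β → γ) :
    (∅ : Set M).Definable L {v : γ → M | fiberRel φ (v ∘ c) (v ∘ x) (v ∘ z)} := by
  refine empty_definable_iff.2 ⟨φ.relabel (Sum.elim (Sum.elim x z) c), ?_⟩
  ext v
  simp only [fiberRel, mem_ofPred_eq, Formula.realize_relabel, Sum.comp_elim]

end Definability

section FiniteDefinability

universe w

variable {L : FirstOrder.Language.{u, v}} {α ζ : Type w} [Finite α] [Finite ζ]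

theorem definable_hasSplittingTree {M : Type*} [L.Structure M] {A : Set M} {γ : Type w}
    {C : (γ → M) → (α → M) → (ζ → M) → Prop} {D : (γ → M) → Set (ζ → M)}
    (hC : A.Definable L {v : (γ ⊕ α) ⊕ ζ → M |
      C (v ∘ Sum.inl ∘ Sum.inl) (v ∘ Sum.inl ∘ Sum.inr) (v ∘ Sum.inr)})
    (hD : A.Definable L {v : γ ⊕ ζ → M | v ∘ Sum.inr ∈ D (v ∘ Sum.inl)}) (h : ℕ) :
    A.Definable L {v | HasSplittingTree (C v) h univ (D v)} := by
  induction h generalizing γ with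
  | zero => exact hD.exists_of_finite
  | succ h ih =>
    have hC' := hC.preimage_comp (Sum.map (Sum.map Sum.inl id) id :
      (γ ⊕ α) ⊕ ζ → ((γ ⊕ α) ⊕ α) ⊕ ζ)
    have hD' := hD.preimage_comp (Sum.map Sum.inl id : γ ⊕ ζ → (γ ⊕ α) ⊕ ζ)
    have hpos := ih (C := fun v => C (v ∘ Sum.inl))
      (D := fun v => {z ∈ D (v ∘ Sum.inl) | C (v ∘ Sum.inl) (v ∘ Sum.inr) z}) hC' (hD'.inter hC)
    have hneg := ih (C := fun v => C (v ∘ Sum.inl))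
      (D := fun v => {z ∈ D (v ∘ Sum.inl) | ¬ C (v ∘ Sum.inl) (v ∘ Sum.inr) z}) hC'
      (hD'.inter hC.compl)
    simpa [HasSplittingTree] using! (hpos.inter hneg).exists_of_finite

-- The parameter tuple `e` concatenates the tuples `e ∘ ν t` of a finite `φ`-type with signs `σ t`.
theorem exists_formula_hasSplittingTree (M : Type*) [L.Structure M] {β κ : Type w} {ι : Type*}
    [Finite ι] (φ : L.Formula ((α ⊕ ζ) ⊕ β)) (R : ℕ) (σ : ι → Bool) (ν : ι → α → κ) :
    ∃ θ : L.Formula ((α ⊕ β) ⊕ κ), ∀ (x : α → M) (y : β → M) (e : κ → M),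
      fiberRel θ e x y ↔ HasSplittingTree (fiberRel φ y) R univ
        {z | (∀ t, fiberRel φ y (e ∘ ν t) z ↔ σ t = true) ∧ fiberRel φ y x z} := by
  let C (v : (α ⊕ β) ⊕ κ → M) := fiberRel (ζ := ζ) φ (v ∘ Sum.inl ∘ Sum.inr)
  let D (v : (α ⊕ β) ⊕ κ → M) : Set (ζ → M) :=
    {z | (∀ t, C v (v ∘ Sum.inr ∘ ν t) z ↔ σ t = true) ∧ C v (v ∘ Sum.inl ∘ Sum.inl) z}
  have hC : (∅ : Set M).Definable L {v : (((α ⊕ β) ⊕ κ) ⊕ α) ⊕ ζ → M |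
      C (v ∘ Sum.inl ∘ Sum.inl) (v ∘ Sum.inl ∘ Sum.inr) (v ∘ Sum.inr)} :=
    definable_fiberRel φ _ _ _
  have hD : (∅ : Set M).Definable L {v : ((α ⊕ β) ⊕ κ) ⊕ ζ → M |
      v ∘ Sum.inr ∈ D (v ∘ Sum.inl)} := by
    have hlit (x : α → ((α ⊕ β) ⊕ κ) ⊕ ζ) (s : Bool) : (∅ : Set M).Definable L
        {v : ((α ⊕ β) ⊕ κ) ⊕ ζ → M | C (v ∘ Sum.inl) (v ∘ x) (v ∘ Sum.inr) ↔ s = true} := by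
      have := definable_fiberRel (M := M) φ x Sum.inr (Sum.inl ∘ Sum.inl ∘ Sum.inr)
      cases s
      · simpa using! this.compl
      · simpa using! this
    simpa [D, ofPred_and, ofPred_forall] using!
      (definable_iInter_of_finite fun t => hlit (Sum.inl ∘ Sum.inr ∘ ν t) (σ t)).inter
        (hlit (Sum.inl ∘ Sum.inl ∘ Sum.inl) true)
  obtain ⟨θ, hθ⟩ := empty_definable_iff.1 (definable_hasSplittingTree hC hD R)
  exact ⟨θ, fun x y e => (Set.ext_iff.1 hθ (Sum.elim (Sum.elim x y) e)).symm⟩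

end FiniteDefinability

section Ultrapower

variable {L : FirstOrder.Language.{u, v}} {M : Type*} {α β : Type*}

/-- The ultrapower of `M` by a nonprincipal ultrafilter on `ℕ`, a concrete source of compactness
for countable families of conditions. -/
abbrev NatUltrapower (M : Type*) : Type _ :=
  ((hyperfilter ℕ : Ultrafilter ℕ) : Filter ℕ).Product fun _ => M

/-- The tuple of `NatUltrapower M` represented by a sequence of tuples of `M`. -/
noncomputable def ultraTuple (x : ℕ → α → M) : α → NatUltrapower M :=
  fun i => ((fun k => x k i : ℕ → M) :)

theorem sumElim_ultraTuple (x : ℕ → α → M) (y : ℕ → β → M) :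
    Sum.elim (ultraTuple x) (ultraTuple y) = ultraTuple fun k => Sum.elim (x k) (y k) := by
  ext (_ | _) <;> rfl

variable [L.Structure M] [Nonempty M]

theorem realize_ultraTuple (φ : L.Formula α) (x : ℕ → α → M) :
    φ.Realize (ultraTuple x) ↔ ∀ᶠ k in hyperfilter ℕ, φ.Realize (x k) :=
  Ultraproduct.realize_formula_cast φ fun i k => x k i

theorem realize_ultraTuple_iff_of_eventually {φ : L.Formula α} {x : ℕ → α → M} {p : Prop}
    (h : ∀ᶠ k in atTop, (φ.Realize (x k) ↔ p)) : φ.Realize (ultraTuple x) ↔ p := by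
  have h' : ∀ᶠ k in (hyperfilter ℕ : Filter ℕ), (φ.Realize (x k) ↔ p) :=
    Nat.hyperfilter_le_atTop h
  rw [realize_ultraTuple, eventually_congr h', eventually_const]

instance NatUltrapower.instModel (T : L.Theory) [M ⊨ T] : NatUltrapower M ⊨ T := by
  refine ⟨fun φ hφ => ?_⟩
  rw [Ultraproduct.sentence_realize]
  exact .of_forall fun _ => Theory.realize_sentence_of_mem T hφ

end Ultrapower

section OrderProperty

variable {L : FirstOrder.Language.{u, v}} {T : L.Theory}

theorem exists_hasOPWithParams_of_hasLadder {α ζ β : Type*}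
    (M : Theory.ModelType.{u, v, max u v} T) (φ : L.Formula ((α ⊕ ζ) ⊕ β))
    (H : ∀ k, ∃ c : β → M, HasLadder (fiberRel φ c) k univ univ) :
    ∃ (N : Theory.ModelType.{u, v, max u v} T) (c : β → N), HasOPWithParams φ c := by
  choose c x z _ _ hφ using fun k => H (k + 1)
  refine ⟨.of T (NatUltrapower M), ultraTuple c, ⟨NatUltrapower M, .refl L _⟩,
    fun i => ultraTuple fun k => x k (Fin.ofNat (k + 1) i),
    fun j => ultraTuple fun k => z k (Fin.ofNat (k + 1) j), fun i j => ?_⟩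
  change φ.Realize (Sum.elim (Sum.elim (ultraTuple _) (ultraTuple _)) (ultraTuple c)) ↔ _
  rw [sumElim_ultraTuple, sumElim_ultraTuple]
  refine realize_ultraTuple_iff_of_eventually ?_
  filter_upwards [eventually_ge_atTop i, eventually_ge_atTop j] with k hi hj
  refine (hφ k _ _).trans ?_
  rw [Fin.lt_def, Fin.val_ofNat, Fin.val_ofNat, Nat.mod_eq_of_lt (by omega),
    Nat.mod_eq_of_lt (by omega)]

theorem eventually_floor_mul_lt_floor_mul_iff {K : Type*} [Field K] [LinearOrder K]
    [IsStrictOrderedRing K] [FloorRing K] [TopologicalSpace K] [OrderTopology K] {s t : K}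
    (hs : 0 ≤ s) (ht : 0 ≤ t) :
    ∀ᶠ k : ℕ in atTop, (⌊s * k⌋₊ < ⌊t * k⌋₊ ↔ s < t) := by
  obtain hts | hst := le_or_gt t s
  · filter_upwards with k
    exact iff_of_false (Nat.floor_mono (by gcongr)).not_gt hts.not_gt
  · have hlim (a : K) (ha : 0 ≤ a) :
        Tendsto (fun k : ℕ => (⌊a * k⌋₊ : K) / k) atTop (𝓝 a) :=
      (tendsto_nat_floor_mul_div_atTop ha).comp tendsto_natCast_atTop_atTop
    filter_upwards [(hlim s hs).eventually_lt (hlim t ht) hst] with k hk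
    exact iff_of_true (Nat.cast_lt.1 (lt_imp_lt_of_le_imp_le (fun h => by gcongr) hk)) hst

-- In the ultrapower the given sequences extend to hypernatural indices. The index attached to `q`
-- is the class of `k ↦ ⌊exp q * k⌋`; the exponential makes it nonnegative.
theorem FormulaHasOP.exists_real_indexed {α β : Type*} {φ : L.Formula (α ⊕ β)}
    (hφ : FormulaHasOP T φ) :
    ∃ (M : Theory.ModelType.{u, v, max u v} T) (a : ℝ → α → M) (b : ℝ → β → M),
      ∀ q r, φ.Realize (Sum.elim (a q) (b r)) ↔ q < r := by
  obtain ⟨N, a, b, hab⟩ := hφ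
  refine ⟨.of T (NatUltrapower N), fun q => ultraTuple fun k => a ⌊Real.exp q * k⌋₊,
    fun r => ultraTuple fun k => b ⌊Real.exp r * k⌋₊, fun q r => ?_⟩
  change φ.Realize (Sum.elim (ultraTuple _) (ultraTuple _)) ↔ _
  rw [sumElim_ultraTuple, ← Real.exp_lt_exp]
  refine realize_ultraTuple_iff_of_eventually ?_
  simp only [hab]
  exact eventually_floor_mul_lt_floor_mul_iff (Real.exp_nonneg q) (Real.exp_nonneg r)

theorem FormulaHasOP.relabel_sumMap {α β β' : Type*} {φ : L.Formula (α ⊕ β)}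
    (hφ : FormulaHasOP T φ) (e : β ≃ β') : FormulaHasOP T (φ.relabel (Sum.map id e)) := by
  obtain ⟨M, a, b, hab⟩ := hφ
  refine ⟨M, a, fun j => b j ∘ e.symm, fun i j => ?_⟩
  simp [Formula.realize_relabel, Sum.elim_comp_map, Function.comp_assoc, hab]

end OrderProperty

section Reduction

variable {L : FirstOrder.Language.{u, v}} {α β ζ : Type} [Finite α] [Finite ζ]

theorem exists_hasLadder_of_forall_not_hasSplittingTree {M : Type*} [L.Structure M]
    (φ : L.Formula ((α ⊕ ζ) ⊕ β)) {h : ℕ}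
    (hφ : ∀ y : β → M, ¬ HasSplittingTree (fiberRel φ y) h univ univ)
    {x : ℝ → α → M} {y : ℝ → β → M} {z : ℝ → ζ → M}
    (hlt : ∀ q r, fiberRel φ (y r) (x q) (z r) ↔ q < r) :
    ∃ (k : ℕ) (ψ : L.Formula ((α ⊕ β) ⊕ Fin k)) (c : Fin k → M),
      ∀ l, HasLadder (fiberRel ψ c) l univ univ := by
  have : Uncountable ℝ := by
    simpa only [countable_univ_iff, not_countable_iff] using Cardinal.not_countable_real
  obtain ⟨R, p, hinf⟩ := exists_infinite_common_type_definition
    (χ := fun r => fiberRel φ (y r)) (fun r => hφ (y r)) (fun q : ℚ => x q) z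
  obtain ⟨k, ⟨e⟩⟩ := Finite.exists_equiv_fin (p × α)
  let c (s : Fin k) : M := x (e.symm s).1.1.1 (e.symm s).2
  obtain ⟨ψ, hψ⟩ := exists_formula_hasSplittingTree M φ R (fun t : p => t.1.2)
    fun t i => e (t, i)
  have hc (t : p) : (c ∘ fun i => e (t, i)) = x t.1.1 := by
    ext i
    simp [c]
  refine ⟨k, ψ, c, fun l => (hasLadder_ratCast_lt hinf l).map (fun q => x q) y
    fun q _ r hr => ?_⟩
  refine (hψ _ _ _).trans (Iff.trans ?_ ((hr q).symm.trans (hlt q r)))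
  simp only [hc, solutionSet_insert, iff_true, Subtype.forall]
  rfl

theorem FormulaHasOP.exists_hasOPWithParams_or {T : L.Theory}
    {φ : L.Formula (α ⊕ (ζ ⊕ β))} (hφ : FormulaHasOP T φ) :
    (∃ (M : Theory.ModelType.{u, v, max u v} T) (c : β → M),
        HasOPWithParams (φ.relabel (Equiv.sumAssoc α ζ β).symm) c) ∨
      ∃ (M : Theory.ModelType.{u, v, max u v} T) (k : ℕ) (ψ : L.Formula ((α ⊕ β) ⊕ Fin k))
        (c : Fin k → M), HasOPWithParams ψ c := by
  obtain ⟨M, a, b, hab⟩ := hφ.exists_real_indexed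
  set φ' : L.Formula ((α ⊕ ζ) ⊕ β) := φ.relabel (Equiv.sumAssoc α ζ β).symm
  by_cases htree : ∀ h, ∃ y : β → M, HasSplittingTree (fiberRel φ' y) h univ univ
  · refine .inl (exists_hasOPWithParams_of_hasLadder M φ' fun k => ?_)
    obtain ⟨h, hladder⟩ := exists_height_hasLadder (α → M) (ζ → M) k
    exact (htree h).imp fun y => hladder _ _ _
  · push Not at htree
    obtain ⟨h, hfree⟩ := htree
    have hlt (q r : ℝ) : fiberRel φ' (b r ∘ Sum.inr) (a q) (b r ∘ Sum.inl) ↔ q < r := by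
      rw [← hab, fiberRel, Formula.realize_relabel]
      congr! 1
      ext (_ | _ | _) <;> rfl
    obtain ⟨k, ψ, c, hψ⟩ := exists_hasLadder_of_forall_not_hasSplittingTree φ' hfree hlt
    obtain ⟨N, c', hN⟩ := exists_hasOPWithParams_of_hasLadder M ψ fun l => ⟨c, hψ l⟩
    exact .inr ⟨N, k, ψ, c', hN⟩

theorem order_property_reduction_general {T : L.Theory} {n : ℕ} (hn : 2 ≤ n)
    (φ : L.Formula (α ⊕ Fin n)) (hφ : FormulaHasOP T φ) :
    ∃ (M : Theory.ModelType.{u, v, max u v} T) (n' k : ℕ),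
      n' < n ∧ ∃ (ψ : L.Formula ((α ⊕ Fin n') ⊕ Fin k)) (c : Fin k → M), HasOPWithParams ψ c := by
  obtain ⟨l, rfl⟩ := Nat.exists_eq_add_of_le (Nat.one_le_of_lt hn)
  obtain ⟨M, c, hc⟩ | ⟨M, k, ψ, c, hc⟩ :=
    (hφ.relabel_sumMap finSumFinEquiv.symm).exists_hasOPWithParams_or
  · exact ⟨M, 1, l, by omega, _, c, hc⟩
  · exact ⟨M, l, k, by omega, ψ, c, hc⟩

end Reduction

/-- If a parameter-free formula `φ(x̄; ȳ)` has the order property and `|ȳ| ≥ 2`,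
then there are a model `M` of `T` and a formula `ψ(x̄; ȳ')` with parameters from `M`, with
`|ȳ'| < |ȳ|`, which has the order property. -/
theorem order_property_reduction {L : FirstOrder.Language.{u, v}} (T : L.Theory)
    (hT : T.IsComplete) {m n : ℕ} (hn : 2 ≤ n) (φ : L.Formula (Fin m ⊕ Fin n))
    (hφ : FormulaHasOP T φ) :
    ∃ (M : FirstOrder.Language.Theory.ModelType.{u, v, max u v} T) (n' k : ℕ),
      n' < n ∧ ∃ (ψ : L.Formula ((Fin m ⊕ Fin n') ⊕ Fin k)) (c : Fin k → M),
        HasOPWithParams ψ c := by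
  exact order_property_reduction_general hn φ hφ
end

section
/- Let T be a complete first-order theory and let φ(x̄;ȳ) be a formula without parameters that has the independence property, where the tuple ȳ has length at least 2. Then there exist a model M of T and a formula ψ(x̄;ȳ') with parameters from M such that |ȳ'| < |ȳ| and ψ(x̄;ȳ') has the independence property. -/
open FirstOrder FirstOrder.Language

universe u v

/-
Write `φ(x; y, z)` with `y` one of the variables of `ȳ`. If, as `z` varies, the relations
`φ(·; ·, z)` have unbounded VC dimension, compactness gives a `z` for which `φ(x; y, z)` has the
independence property. Otherwise no `φ(·; ·, z)` shatters `D` points, for some fixed `D`.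

By Ramsey's theorem the sequence witnessing the independence property of `φ` may be taken
homogeneous for the finitely many properties needed. Choose `y, z` with `φ(aᵢ; y, z)` iff `i` is odd
and homogenize the pairs `(a₂ₙ, a₂ₙ₊₁)` for `z`: whether a pattern `σ` on `D` points taken from
successive pairs is realized by some `y` now depends only on the vector `τ` of their parities. It
is realized for `τ = σ`, but for `τ = 0` some `σ` is not, so changing the parities from `0` to `σ`
one at a time we meet a coordinate `k` where `σ` first becomes realizable. Fixing the other points
`w`, the formula `∃ y, ⋀ l, φ(wₗ; y, z) ↔ σ l` with `x` in place of `wₖ` distinguishes even from odd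
points inside a block of points at the `k`-th place. The parities inside that block are free, and
homogeneity of `(aᵢ)` carries every parity word over to one fixed block, so that block is shattered
by formulas in which `y` is quantified.
-/

/-- The pattern `σ` on the tuple `v` is realized by the relation `R`: some `y` is related to exactly
those entries `v l` for which `σ l` is `true`. -/
def RealizesPattern {X Y ι : Type*} (R : X → Y → Prop) (v : ι → X) (σ : ι → Bool) : Prop :=
  ∃ y, ∀ l, R (v l) y ↔ σ l = true

/-- The family of sets `{x | R x y}` shatters some set of `n` points, i.e. its VC dimension is at
least `n`. The points are given as a tuple, which is automatically injective. -/
def ShattersSome {X Y : Type*} (R : X → Y → Prop) (n : ℕ) : Prop :=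
  ∃ v : Fin n → X, ∀ σ, RealizesPattern R v σ

theorem ShattersSome.mono {X Y : Type*} {R : X → Y → Prop} {n n' : ℕ} (hR : ShattersSome R n')
    (h : n ≤ n') : ShattersSome R n := by
  obtain ⟨v, hv⟩ := hR
  refine ⟨v ∘ Fin.castLE h, fun σ ↦ ?_⟩
  obtain ⟨y, hy⟩ := hv (Function.extend (Fin.castLE h) σ fun _ ↦ false)
  exact ⟨y, fun i ↦ by rw [Function.comp_apply, hy, (Fin.castLE_injective h).extend_apply]⟩

theorem exists_forall_of_antitone_of_forall_exists {ι : Type*} [Finite ι] {P : ι → ℕ → Prop}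
    (hP : ∀ i, Antitone (P i)) (h : ∀ n, ∃ i, P i n) : ∃ i, ∀ n, P i n := by
  by_contra! hfail
  have hlarge : ∀ i, ∀ᶠ n in Filter.atTop, ¬P i n := fun i ↦
    let ⟨n₀, hn₀⟩ := hfail i
    (Filter.eventually_ge_atTop n₀).mono fun _ hn hPn ↦ hn₀ (hP i hn hPn)
  obtain ⟨n, hn⟩ := (Filter.eventually_all.2 hlarge).exists
  obtain ⟨i, hi⟩ := h n
  exact hn i hi

theorem exists_infinite_subset_forall_inter_Ioi {κ : Type*} [Finite κ] {Q : ℕ → κ → Set ℕ → Prop}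
    (hQ : ∀ m K, Antitone (Q m K))
    (h : ∀ A : Set ℕ, A.Infinite → ∃ m ∈ A, ∃ B ⊆ A ∩ Set.Ioi m, B.Infinite ∧ ∃ K, Q m K B)
    {A : Set ℕ} (hA : A.Infinite) :
    ∃ B ⊆ A, B.Infinite ∧ ∃ K, ∀ m ∈ B, Q m K (B ∩ Set.Ioi m) := by
  have hstep (A : {A : Set ℕ // A.Infinite}) : ∃ m ∈ A.1, ∃ B : {B : Set ℕ // B.Infinite},
      B.1 ⊆ A.1 ∩ Set.Ioi m ∧ ∃ K, Q m K B.1 := by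
    obtain ⟨m, hm, B, hBA, hB, K, hK⟩ := h A.1 A.2
    exact ⟨m, hm, ⟨B, hB⟩, hBA, K, hK⟩
  choose point hpoint next hnext colour hcolour using hstep
  let S (n : ℕ) : {A : Set ℕ // A.Infinite} := next^[n] ⟨A, hA⟩
  have hS (n : ℕ) : S (n + 1) = next (S n) := Function.iterate_succ_apply' next n _
  have hS_anti : Antitone fun n ↦ (S n).1 := antitone_nat_of_succ_le fun n ↦ by
    rw [hS]
    exact (hnext _).trans Set.inter_subset_left
  have hmono : StrictMono fun n ↦ point (S n) := strictMono_nat_of_lt_succ fun n ↦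
    (hnext (S n) (hS n ▸ hpoint (S (n + 1)))).2
  obtain ⟨K, hK⟩ := Finite.exists_infinite_fiber fun n ↦ colour (S n)
  refine ⟨_, ?_, (Set.infinite_coe_iff.1 hK).image hmono.injective.injOn, K, ?_⟩
  · rintro _ ⟨n, -, rfl⟩
    exact hS_anti n.zero_le (hpoint _)
  · rintro _ ⟨n, rfl, rfl⟩
    refine hQ _ _ ?_ (hcolour (S n))
    rintro _ ⟨⟨n', -, rfl⟩, hlt⟩
    rw [← hS]
    exact hS_anti (hmono.lt_iff_lt.1 hlt) (hpoint _)

theorem exists_infinite_subset_forall_strictMono_eq {κ : Type*} [Finite κ] {r : ℕ}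
    {c : (ℕ → ℕ) → κ} (hc : DependsOn c (Set.Iio r)) {A : Set ℕ} (hA : A.Infinite) :
    ∃ B ⊆ A, B.Infinite ∧ ∃ K, ∀ g : ℕ → ℕ, StrictMono g → (∀ n, g n ∈ B) → c g = K := by
  induction r generalizing c A with
  | zero => exact ⟨A, subset_rfl, hA, c id, fun _ _ _ ↦ hc fun i hi ↦ absurd hi i.not_lt_zero⟩
  | succ r ih =>
    let cons (m : ℕ) (g : ℕ → ℕ) : ℕ → ℕ
      | 0 => m
      | n + 1 => g n
    have hcons (m : ℕ) : DependsOn (fun g ↦ c (cons m g)) (Set.Iio r) := fun _ _ h ↦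
      hc fun
        | 0, _ => rfl
        | n + 1, hn => h n (Nat.succ_lt_succ_iff.1 hn)
    obtain ⟨B, hBA, hB, K, hK⟩ := exists_infinite_subset_forall_inter_Ioi
      (Q := fun m K B ↦ ∀ g : ℕ → ℕ, StrictMono g → (∀ n, g n ∈ B) → c (cons m g) = K)
      (fun _ _ _ _ hB hQ g hg hgB ↦ hQ g hg fun n ↦ hB (hgB n))
      (fun A hA ↦ by
        obtain ⟨m, hm⟩ := hA.nonempty
        have hinf : (A ∩ Set.Ioi m).Infinite := by
          simpa only [Set.sdiff_eq, Set.compl_Iic] using hA.sdiff (Set.finite_Iic m)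
        exact ⟨m, hm, ih (hcons m) hinf⟩) hA
    refine ⟨B, hBA, hB, K, fun g hg hgB ↦ ?_⟩
    have hg_cons : g = cons (g 0) fun i ↦ g (i + 1) := funext fun
      | 0 => rfl
      | _ + 1 => rfl
    rw [hg_cons]
    exact hK (g 0) (hgB 0) _ (fun i j hij ↦ hg (Nat.succ_lt_succ hij))
      fun i ↦ ⟨hgB (i + 1), hg i.succ_pos⟩

theorem exists_strictMono_forall_comp_eq {κ : Type*} [Finite κ] {r : ℕ}
    {c : (ℕ → ℕ) → κ} (hc : DependsOn c (Set.Iio r)) :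
    ∃ f : ℕ → ℕ, StrictMono f ∧ ∃ K, ∀ g : ℕ → ℕ, StrictMono g → c (f ∘ g) = K := by
  obtain ⟨B, -, hB, K, hK⟩ := exists_infinite_subset_forall_strictMono_eq hc Set.infinite_univ
  exact ⟨Nat.nth (· ∈ B), Nat.nth_strictMono hB, K, fun g hg ↦
    hK _ ((Nat.nth_strictMono hB).comp hg) fun n ↦ Nat.nth_mem_of_infinite hB (g n)⟩

theorem exists_not_and_update_of_not_of {ι β : Type*} [Finite ι] [DecidableEq ι]
    {P : (ι → β) → Prop} {σ τ : ι → β} (hτ : ¬P τ) (hσ : P σ) :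
    ∃ ρ k, ¬P ρ ∧ P (Function.update ρ k (σ k)) := by
  cases nonempty_fintype ι
  by_contra! hstuck
  have hpiecewise (s : Finset ι) : ¬P (s.piecewise σ τ) := by
    induction s using Finset.induction_on with
    | empty => rwa [Finset.piecewise_empty]
    | insert k s _ ih =>
      rw [Finset.piecewise_insert]
      exact hstuck _ k ih
  exact hpiecewise Finset.univ (by rwa [Finset.piecewise_univ])

/-- The sequence `0, E, 2 * E, …` with the entry `E * k` moved to `E * k + j`. For `j < E` the entry
at `l` lies in the block `[E * l, E * (l + 1))`. -/
def blockIndex (E k j : ℕ) : ℕ → ℕ :=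
  Function.update (fun l ↦ E * l) k (E * k + j)

section blockIndex

variable {E k j : ℕ}

theorem blockIndex_div (hj : j < E) (l : ℕ) : blockIndex E k j l / E = l := by
  obtain rfl | hl := eq_or_ne l k
  · rw [blockIndex, Function.update_self, Nat.mul_add_div (Nat.zero_lt_of_lt hj),
      Nat.div_eq_of_lt hj, add_zero]
  · rw [blockIndex, Function.update_of_ne hl, Nat.mul_div_cancel_left _ (Nat.zero_lt_of_lt hj)]

theorem blockIndex_lt_mul_iff (hj : j < E) {l l' : ℕ} : blockIndex E k j l < E * l' ↔ l < l' := by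
  rw [mul_comm, ← Nat.div_lt_iff_lt_mul (Nat.zero_lt_of_lt hj), blockIndex_div hj]

theorem mul_le_blockIndex (l : ℕ) : E * l ≤ blockIndex E k j l := by
  rw [blockIndex, Function.update_apply]
  split_ifs with hl
  · exact hl ▸ Nat.le_add_right _ _
  · exact le_rfl

theorem strictMono_blockIndex (hj : j < E) : StrictMono (blockIndex E k j) := fun _ l' hl ↦
  ((blockIndex_lt_mul_iff hj).2 hl).trans_le (mul_le_blockIndex l')

theorem exists_apply_blockIndex_eq {β : Type*} [Nonempty β] {D : ℕ} {k : Fin D}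
    {τ : Fin E → Fin D → β} (hτ : ∀ j j' l, l ≠ k → τ j l = τ j' l) :
    ∃ ε : ℕ → β, ∀ (j : Fin E) (l : Fin D), ε (blockIndex E k j l) = τ j l := by
  have hfactors : (Function.uncurry τ).FactorsThrough
      fun p : Fin E × Fin D ↦ blockIndex E k p.1 p.2 := by
    rintro ⟨j, l⟩ ⟨j', l'⟩ h
    have hl : l = l' := Fin.ext <| by
      simpa only [blockIndex_div j.2, blockIndex_div j'.2] using congrArg (· / E) h
    subst hl
    obtain rfl | hlk := eq_or_ne l k
    · have hj : j = j' := Fin.ext <| by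
        simpa only [blockIndex, Function.update_self, Nat.add_left_cancel_iff] using h
      rw [hj]
    · exact hτ j j' l hlk
  exact ⟨Function.extend _ (Function.uncurry τ) fun _ ↦ Classical.arbitrary β,
    fun j l ↦ hfactors.extend_apply _ (j, l)⟩

end blockIndex

section Shattering

variable {X Y Z : Type*} {D : ℕ}

theorem exists_strictMono_realizesPattern_blockIndex_iff {R : X → Y → Prop}
    (hR : ¬ShattersSome R D) {p : ℕ → X} {y : Y} (hp : ∀ n, R (p n) y ↔ n.bodd = true) (E : ℕ) :
    ∃ (k : Fin D) (σ : Fin D → Bool), ∀ s : Fin E → Bool, ∃ g : ℕ → ℕ, StrictMono g ∧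
      ∀ j : Fin E, RealizesPattern R (fun l : Fin D ↦ p (g (blockIndex E k j l))) σ ↔
        s j = true := by
  obtain ⟨f, hf, P, hP⟩ := exists_strictMono_forall_comp_eq (r := D)
    (c := fun g (τ σ : Fin D → Bool) ↦ RealizesPattern R (fun l ↦ p (Nat.bit (τ l) (g l))) σ)
    fun _ _ h ↦ by simp only [fun l : Fin D ↦ h l l.2]
  -- So the patterns realized on points chosen from the pairs `{p (2 * n), p (2 * n + 1)}` with
  -- `n ∈ range f` depend only on the vector `τ` of parities.
  have hpattern (g : ℕ → ℕ) (hg : StrictMono g) (τ σ) :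
      RealizesPattern R (fun l : Fin D ↦ p (Nat.bit (τ l) (f (g l)))) σ ↔ P τ σ := by
    rw [← hP g hg]
    rfl
  have hP_self (σ) : P σ σ :=
    (hpattern id strictMono_id σ σ).1 ⟨y, fun l ↦ by rw [hp, Nat.bodd_bit]⟩
  obtain ⟨σ, hσ⟩ : ∃ σ, ¬P (fun _ ↦ false) σ := by
    by_contra! hall
    exact hR ⟨_, fun σ ↦ (hpattern id strictMono_id _ σ).2 (hall σ)⟩
  obtain ⟨ρ, k, hρ, hρk⟩ := exists_not_and_update_of_not_of (P := fun τ ↦ P τ σ) hσ (hP_self σ)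
  refine ⟨k, σ, fun s ↦ ?_⟩
  let τ (j : Fin E) : Fin D → Bool := if s j then Function.update ρ k (σ k) else ρ
  have hτ (j l) (hl : l ≠ k) : τ j l = ρ l := by
    dsimp only [τ]
    split_ifs
    · exact Function.update_of_ne hl _ _
    · rfl
  obtain ⟨ε, hε⟩ := exists_apply_blockIndex_eq fun j j' l hl ↦ (hτ j l hl).trans (hτ j' l hl).symm
  refine ⟨fun n ↦ Nat.bit (ε n) (f n), fun m n hmn ↦ Nat.bit_lt_bit _ _ (hf hmn), fun j ↦ ?_⟩
  simp only [hε]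
  rw [hpattern _ (strictMono_blockIndex j.2)]
  cases hs : s j <;> simpa [τ, hs]

theorem exists_shattersSome_realizesPattern_update {R : Z → X → Y → Prop}
    (hD : ∀ z, ¬ShattersSome (R z) D) {a : ℕ → X}
    (ha : ∀ S : Set ℕ, ∃ z y, ∀ i, R z (a i) y ↔ i ∈ S) (E : ℕ) :
    ∃ (k : Fin D) (σ : Fin D → Bool) (w : Fin D → X),
      ShattersSome (fun x z ↦ RealizesPattern (R z) (Function.update w k x) σ) E := by
  obtain ⟨f, hf, C, hC⟩ := exists_strictMono_forall_comp_eq (r := E * D)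
    (c := fun g (k : Fin D) (σ : Fin D → Bool) (s : Fin E → Bool) ↦ ∃ z, ∀ j : Fin E,
      RealizesPattern (R z) (fun l : Fin D ↦ a (g (blockIndex E k j l))) σ ↔ s j = true)
    fun _ _ h ↦ by
      simp only [fun (k : Fin D) (j : Fin E) (l : Fin D) ↦
        h (blockIndex E k j l) ((blockIndex_lt_mul_iff j.2).2 l.2)]
  obtain ⟨z, y, hy⟩ := ha (f '' {n | n.bodd = true})
  obtain ⟨k, σ, hkσ⟩ := exists_strictMono_realizesPattern_blockIndex_iff (hD z) (p := a ∘ f)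
    (fun n ↦ (hy _).trans hf.injective.mem_set_image) E
  have hC_all (s : Fin E → Bool) : C k σ s := by
    obtain ⟨g, hg, hgs⟩ := hkσ s
    rw [← hC g hg]
    exact ⟨z, hgs⟩
  have hupdate (j : Fin E) : (fun l : Fin D ↦ a (f (blockIndex E k j l))) =
      Function.update (fun l : Fin D ↦ a (f (E * l))) k (a (f (E * k + j))) := by
    funext l
    simp only [blockIndex, Function.update_apply, Fin.val_inj]
    split_ifs <;> rfl
  refine ⟨k, σ, fun l ↦ a (f (E * l)), fun j ↦ a (f (E * k + j)), fun s ↦ ?_⟩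
  obtain ⟨z, hz⟩ := (congrFun₃ (hC id strictMono_id) k σ s).mpr (hC_all s)
  exact ⟨z, fun j ↦ by simpa only [← hupdate, Function.comp_id] using hz j⟩

theorem exists_forall_shattersSome_realizesPattern_update {R : Z → X → Y → Prop}
    (hD : ∀ z, ¬ShattersSome (R z) D) {a : ℕ → X}
    (ha : ∀ S : Set ℕ, ∃ z y, ∀ i, R z (a i) y ↔ i ∈ S) :
    ∃ (k : Fin D) (σ : Fin D → Bool), ∀ E, ∃ w : Fin D → X,
      ShattersSome (fun x z ↦ RealizesPattern (R z) (Function.update w k x) σ) E := by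
  obtain ⟨⟨k, σ⟩, h⟩ := exists_forall_of_antitone_of_forall_exists
    (P := fun (i : Fin D × (Fin D → Bool)) E ↦ ∃ w : Fin D → X,
      ShattersSome (fun x z ↦ RealizesPattern (R z) (Function.update w i.1 x) i.2) E)
    (fun _ _ _ hE ⟨w, hw⟩ ↦ ⟨w, hw.mono hE⟩)
    fun E ↦
      let ⟨k, σ, h⟩ := exists_shattersSome_realizesPattern_update hD ha E
      ⟨(k, σ), h⟩
  exact ⟨k, σ, h⟩

end Shattering

section Formulas

variable {L : FirstOrder.Language.{u, v}} {α β γ : Type*}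

theorem exists_hasIPWithParams_of_forall_shattersSome {T : L.Theory}
    {N : FirstOrder.Language.Theory.ModelType.{u, v, max u v} T} {ψ : L.Formula ((α ⊕ β) ⊕ γ)}
    (h : ∀ n, ∃ c : γ → N, ShattersSome
      (fun (x : α → N) (y : β → N) ↦ ψ.Realize (Sum.elim (Sum.elim x y) c)) n) :
    ∃ (M : FirstOrder.Language.Theory.ModelType.{u, v, max u v} T) (c : γ → M),
      HasIPWithParams ψ c := by
  classical
  choose c x y hxy using h
  let U : Ultrafilter ℕ := Filter.hyperfilter ℕ
  let P : Type (max u v) := (U : Filter ℕ).Product fun _ ↦ (N : Type (max u v))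
  have hPT : P ⊨ T := ⟨fun θ hθ ↦ (Ultraproduct.sentence_realize θ).2 <|
    Filter.Eventually.of_forall fun _ ↦ Theory.realize_sentence_of_mem T hθ⟩
  let x' (i : ℕ) (s : α) (n : ℕ) : N := if hi : i < n then x n ⟨i, hi⟩ s else Classical.arbitrary N
  let y' (S : Set ℕ) (s : β) (n : ℕ) : N := y n (fun i ↦ decide (i.1 ∈ S)) s
  refine ⟨Theory.ModelType.of T P, fun s ↦ ((fun n ↦ c n s : ℕ → N) : P),
    ⟨P, ElementaryEmbedding.refl L P⟩, fun i s ↦ (x' i s : P), fun S s ↦ (y' S s : P),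
    fun i S ↦ ?_⟩
  have hlarge : ∀ᶠ n in (U : Filter ℕ), i < n :=
    Nat.hyperfilter_le_atTop (Filter.eventually_gt_atTop i)
  have hfactor : ∀ᶠ n in (U : Filter ℕ),
      (ψ.Realize (Sum.elim (Sum.elim (x' i · n) (y' S · n)) (c n)) ↔ i ∈ S) := by
    filter_upwards [hlarge] with n hn
    simpa only [x', y', hn, dite_true, decide_eq_true_eq] using
      hxy n (fun i ↦ decide (i.1 ∈ S)) ⟨i, hn⟩
  have hlos := Ultraproduct.realize_formula_cast (u := U) ψ
    (Sum.elim (Sum.elim (x' i) (y' S)) fun s n ↦ c n s)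
  have hproduct : (fun t ↦ ((Sum.elim (Sum.elim (x' i) (y' S)) (fun s n ↦ c n s) t : ℕ → N) : P)) =
      Sum.elim (Sum.elim (fun s ↦ (x' i s : P)) fun s ↦ (y' S s : P))
        fun s ↦ ((fun n ↦ c n s : ℕ → N) : P) := by
    ext ((s | s) | s) <;> rfl
  have hcoord (n : ℕ) : (fun t ↦ Sum.elim (Sum.elim (x' i) (y' S)) (fun s n ↦ c n s) t n) =
      Sum.elim (Sum.elim (x' i · n) (y' S · n)) (c n) := by
    ext ((s | s) | s) <;> rfl
  rw [hproduct] at hlos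
  simp only [hcoord] at hlos
  exact hlos.trans ((Filter.eventually_congr hfactor).trans Filter.eventually_const)

theorem HasIPWithParams.exists_fin_params {M : Type (max u v)} [L.Structure M]
    {ψ : L.Formula ((α ⊕ β) ⊕ γ)} {c : γ → M} (h : HasIPWithParams ψ c) :
    ∃ (k : ℕ) (ψ' : L.Formula ((α ⊕ β) ⊕ Fin k)) (c' : Fin k → M), HasIPWithParams ψ' c' := by
  classical
  obtain ⟨N, a, b, hab⟩ := h
  let e := ψ.freeVarFinset.toRight.equivFin
  let f : ψ.freeVarFinset → (α ⊕ β) ⊕ Fin ψ.freeVarFinset.toRight.card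
    | ⟨.inl t, _⟩ => .inl t
    | ⟨.inr s, hs⟩ => .inr (e ⟨s, Finset.mem_toRight.2 hs⟩)
  refine ⟨_, ψ.restrictFreeVar f, fun i ↦ c (e.symm i), N, a, b, fun i S ↦ ?_⟩
  rw [← hab]
  refine BoundedFormula.realize_restrictFreeVar _ ?_
  rintro ⟨t | s, hs⟩
  · rfl
  · exact congrArg (fun s : ψ.freeVarFinset.toRight ↦ N.emb (c s)) (e.symm_apply_apply _)

/-- The formula `∃ y, ⋀ l, φ(v l; y, z) ↔ σ l` in `x` and `z` with parameters `w`, where `v` is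
`w` with its entry at `k` replaced by `x`. -/
noncomputable def patternFormula [Finite β] {D : ℕ} (φ : L.Formula (α ⊕ (β ⊕ γ))) (k : Fin D)
    (σ : Fin D → Bool) : L.Formula ((α ⊕ γ) ⊕ (Fin D × α)) :=
  Formula.iExs β <| Formula.iInf fun l ↦
    let φ' := φ.relabel <| Sum.elim
      (fun i ↦ .inl (if l = k then .inl (.inl i) else .inr (l, i)))
      (Sum.elim .inr fun i ↦ .inl (.inl (.inr i)))
    if σ l then φ' else φ'.not

theorem realize_patternFormula [Finite β] {N : Type*} [L.Structure N] {D : ℕ}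
    {φ : L.Formula (α ⊕ (β ⊕ γ))} {k : Fin D} {σ : Fin D → Bool} {x : α → N} {z : γ → N}
    {w : Fin D → α → N} :
    (patternFormula φ k σ).Realize (Sum.elim (Sum.elim x z) (Function.uncurry w)) ↔
      RealizesPattern (fun x y ↦ φ.Realize (Sum.elim x (Sum.elim y z))) (Function.update w k x)
        σ := by
  simp only [patternFormula, Formula.realize_iExs, Formula.realize_iInf]
  refine exists_congr fun y ↦ forall_congr' fun l ↦ ?_
  have hassign : Sum.elim (Sum.elim (Sum.elim x z) (Function.uncurry w)) y ∘
      Sum.elim (fun i ↦ .inl (if l = k then .inl (.inl i) else .inr (l, i)))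
        (Sum.elim .inr fun i ↦ .inl (.inl (.inr i))) =
      Sum.elim (Function.update w k x l) (Sum.elim y z) := by
    ext (i | i | i)
    · by_cases hl : l = k <;> simp [hl, Function.uncurry]
    · rfl
    · rfl
  cases hσ : σ l <;> simp [Formula.realize_relabel, hassign]

theorem FormulaHasIP.exists_hasIPWithParams_or [Finite β] {T : L.Theory}
    {φ : L.Formula (α ⊕ (β ⊕ γ))} (hφ : FormulaHasIP T φ) :
    ∃ M : FirstOrder.Language.Theory.ModelType.{u, v, max u v} T,
      (∃ c : γ → M, HasIPWithParams (φ.relabel (Equiv.sumAssoc α β γ).symm) c) ∨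
        ∃ (D : ℕ) (k : Fin D) (σ : Fin D → Bool) (c : Fin D × α → M),
          HasIPWithParams (patternFormula φ k σ) c := by
  obtain ⟨N, a, b, hab⟩ := hφ
  let R (z : γ → N) (x : α → N) (y : β → N) : Prop := φ.Realize (Sum.elim x (Sum.elim y z))
  by_cases hR : ∀ D, ∃ z, ShattersSome (R z) D
  · have hψ (x y z) : (φ.relabel (Equiv.sumAssoc α β γ).symm).Realize
        (Sum.elim (Sum.elim x y) z) ↔ R z x y := by
      rw [Formula.realize_relabel]
      exact iff_of_eq <| congrArg φ.Realize <| by ext (i | i | i) <;> rfl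
    obtain ⟨M, hM⟩ := exists_hasIPWithParams_of_forall_shattersSome
      (N := N) (ψ := φ.relabel (Equiv.sumAssoc α β γ).symm) (by simpa only [hψ] using hR)
    exact ⟨M, .inl hM⟩
  · push Not at hR
    obtain ⟨D, hD⟩ := hR
    have ha (S : Set ℕ) : ∃ z y, ∀ i, R z (a i) y ↔ i ∈ S :=
      ⟨b S ∘ .inr, b S ∘ .inl, fun i ↦ by simp only [R, Sum.elim_comp_inl_inr, hab]⟩
    obtain ⟨k, σ, hkσ⟩ := exists_forall_shattersSome_realizesPattern_update hD ha
    obtain ⟨M, c, hc⟩ := exists_hasIPWithParams_of_forall_shattersSome (ψ := patternFormula φ k σ)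
      fun E ↦
        let ⟨w, hw⟩ := hkσ E
        ⟨Function.uncurry w, by simpa only [realize_patternFormula] using hw⟩
    exact ⟨M, .inr ⟨D, k, σ, c, hc⟩⟩

theorem FormulaHasIP.relabel {δ : Type*} {T : L.Theory} {φ : L.Formula (α ⊕ β)}
    (hφ : FormulaHasIP T φ) (e : β ≃ δ) : FormulaHasIP T (φ.relabel (Sum.map id e)) := by
  obtain ⟨N, a, b, hab⟩ := hφ
  refine ⟨N, a, fun S ↦ b S ∘ e.symm, fun i S ↦ ?_⟩
  rw [Formula.realize_relabel, Sum.elim_comp_map, Function.comp_id, Function.comp_assoc,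
    e.symm_comp_self, Function.comp_id, hab]

theorem independence_property_reduction_general (T : L.Theory) {n : ℕ} (hn : 2 ≤ n)
    (φ : L.Formula (α ⊕ Fin n)) (hφ : FormulaHasIP T φ) :
    ∃ (M : FirstOrder.Language.Theory.ModelType.{u, v, max u v} T) (n' k : ℕ),
      n' < n ∧ ∃ (ψ : L.Formula ((α ⊕ Fin n') ⊕ Fin k)) (c : Fin k → M), HasIPWithParams ψ c := by
  obtain ⟨n, rfl⟩ := Nat.exists_eq_add_of_le (one_le_two.trans hn)
  obtain ⟨M, ⟨c, hc⟩ | ⟨D, l, σ, c, hc⟩⟩ :=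
    (hφ.relabel finSumFinEquiv.symm).exists_hasIPWithParams_or
  · obtain ⟨k, hk⟩ := hc.exists_fin_params
    exact ⟨M, 1, k, hn, hk⟩
  · obtain ⟨k, hk⟩ := hc.exists_fin_params
    exact ⟨M, n, k, by lia, hk⟩

end Formulas

/-- If a parameter-free formula `φ(x̄; ȳ)` has the independence property and
`|ȳ| ≥ 2`, then there are a model `M` of `T` and a formula `ψ(x̄; ȳ')` with parameters from
`M`, with `|ȳ'| < |ȳ|`, which has the independence property. -/
theorem independence_property_reduction {L : FirstOrder.Language.{u, v}} (T : L.Theory)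
    (hT : T.IsComplete) {m n : ℕ} (hn : 2 ≤ n) (φ : L.Formula (Fin m ⊕ Fin n))
    (hφ : FormulaHasIP T φ) :
    ∃ (M : FirstOrder.Language.Theory.ModelType.{u, v, max u v} T) (n' k : ℕ),
      n' < n ∧ ∃ (ψ : L.Formula ((Fin m ⊕ Fin n') ⊕ Fin k)) (c : Fin k → M),
        HasIPWithParams ψ c :=
  independence_property_reduction_general T hn φ hφ
end

section
/- Let T be a complete first-order theory and let φ(x̄;ȳ) be a formula which has the independence property. Then there is a family (āᵢ, b̄ᵢ : i ∈ ℚ) of tuples in some model M of T, indexed by the random ordered bipartite graph G* (with āᵢ indexed by U(G*) ≅ ℚ and b̄ⱼ indexed by V(G*) ≅ ℚ), such that M ⊨ φ(āᵢ; b̄ⱼ) if and only if R*(i,j) holds, and the family (āᵢ, b̄ᵢ : i ∈ ℚ) is L*-indiscernible. -/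
open FirstOrder FirstOrder.Language

universe u v

/-! By compactness it suffices to find, for every finite ordered digraph `W` and finitely many
formulas, tuples indexed by `W` such that `φ` defines the edges and the truth of each of these
formulas depends only on the quantifier-free type of the indices. An ordered bipartite graph
becomes such a digraph when the two parts are put one after the other. The independence property
realizes the edges of any countable digraph by `φ`, so the claim is a Ramsey statement: there is a
finite digraph `Y` such that, for every colouring of its tuples, `Y` contains a copy of `W` in
which the colour of an increasing tuple depends only on the edges it spans.

Such a `Y` can be taken `p`-partite. By the partite construction, which applies the Hales–Jewett
theorem to one edge pattern at a time, the colour of a tuple meeting each part at most once depends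
only on its edges and on the parts it meets. Placing `W` on a set of parts that is homogeneous in
the sense of Ramsey's theorem removes the dependence on the parts. -/

universe w x y

section Ramsey

open Filter

theorem exists_eventually_eq_of_finite {α K : Type*} [Finite K] (U : Ultrafilter α) (g : α → K) :
    ∃ k, ∀ᶠ x in U, g x = k :=
  U.eventually_exists_iff.1 <| .of_forall fun x => ⟨g x, rfl⟩

theorem exists_iterated_limit {α K : Type*} [DecidableEq α] [Finite K] (U : Ultrafilter α)
    (c : Finset α → K) :
    ∃ C : ℕ → Finset α → K, C 0 = c ∧ ∀ k s, ∀ᶠ x in U, C k (insert x s) = C (k + 1) s := by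
  choose lim hlim using fun (c : Finset α → K) s =>
    exists_eventually_eq_of_finite U fun x => c (insert x s)
  exact ⟨fun k => lim^[k] c, rfl, fun k s => by
    simpa only [Function.iterate_succ_apply'] using hlim (lim^[k] c) s⟩

theorem exists_finset_forall_subset_eq_of_limit {α K : Type*} [DecidableEq α] [Infinite α]
    {C : ℕ → Finset α → K}
    (hC : ∀ k s, ∀ᶠ x in hyperfilter α, C k (insert x s) = C (k + 1) s) (m N : ℕ) :
    ∃ H : Finset α, H.card = m ∧ ∀ k ≤ N, ∀ s ⊆ H, C k s = C (k + s.card) ∅ := by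
  induction m generalizing N with
  | zero => exact ⟨∅, rfl, fun k _ s hs => by simp [Finset.subset_empty.1 hs]⟩
  | succ m ih =>
    obtain ⟨H, hcard, hH⟩ := ih (N + 1)
    have hlim : ∀ᶠ x in hyperfilter α, ∀ k ∈ Finset.range (N + 1), ∀ s ∈ H.powerset,
        C k (insert x s) = C (k + 1) s := by
      simp only [eventually_all_finset]
      exact fun k _ s _ => hC k s
    have hnew : ∀ᶠ x in hyperfilter α, x ∉ H :=
      compl_mem_hyperfilter_of_finite H.finite_toSet
    obtain ⟨x, hx, hxH⟩ := (hlim.and hnew).exists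
    refine ⟨insert x H, by rw [Finset.card_insert_of_notMem hxH, hcard], fun k hk s hs => ?_⟩
    by_cases hxs : x ∈ s
    · have hsub : s.erase x ⊆ H := Finset.subset_insert_iff.1 hs
      calc C k s = C k (insert x (s.erase x)) := by rw [Finset.insert_erase hxs]
        _ = C (k + 1) (s.erase x) :=
          hx k (Finset.mem_range_succ_iff.2 hk) _ (Finset.mem_powerset.2 hsub)
        _ = C (k + 1 + (s.erase x).card) ∅ := hH (k + 1) (by lia) _ hsub
        _ = C (k + s.card) ∅ := by rw [add_assoc, add_comm 1, Finset.card_erase_add_one hxs]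
    · exact hH k (by lia) s ((Finset.subset_insert_iff_of_notMem hxs).1 hs)

theorem exists_homogeneous_finset {α K : Type*} [Infinite α] [Finite K] (c : Finset α → K)
    (m : ℕ) :
    ∃ H : Finset α, H.card = m ∧ ∀ s ⊆ H, ∀ s' ⊆ H, s.card = s'.card → c s = c s' := by
  classical
  obtain ⟨C, rfl, hC⟩ := exists_iterated_limit (hyperfilter α) c
  obtain ⟨H, hcard, hH⟩ := exists_finset_forall_subset_eq_of_limit hC m 0
  exact ⟨H, hcard, fun s hs s' hs' h => by rw [hH 0 le_rfl s hs, hH 0 le_rfl s' hs', h]⟩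

theorem exists_ramsey_number (K : Type*) [Finite K] (m : ℕ) :
    ∃ p : ℕ, ∀ c : Finset ℕ → K, ∃ H ⊆ Finset.range p, H.card = m ∧
      ∀ s ⊆ H, ∀ s' ⊆ H, s.card = s'.card → c s = c s' := by
  by_contra! hbad
  -- Along an ultrafilter, colourings that are bad on each `range p` converge to a colouring of
  -- `Finset ℕ` without homogeneous sets of size `m`.
  choose c hc using hbad
  choose d hd using fun s => exists_eventually_eq_of_finite (hyperfilter ℕ) fun p => c p s
  obtain ⟨H, hcard, hH⟩ := exists_homogeneous_finset d m
  have hlim : ∀ᶠ p in hyperfilter ℕ, ∀ s ∈ H.powerset, c p s = d s := by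
    simp only [eventually_all_finset]
    exact fun s _ => hd s
  have hrange : ∀ᶠ p in hyperfilter ℕ, H ⊆ Finset.range p :=
    Nat.hyperfilter_le_atTop <| (eventually_gt_atTop (H.sup id)).mono fun p hp x hx =>
      Finset.mem_range.2 <| (Finset.le_sup (f := id) hx).trans_lt hp
  obtain ⟨p, hp, hpH⟩ := (hlim.and hrange).exists
  obtain ⟨s, hs, s', hs', hss', hne⟩ := hc p H hpH hcard
  refine hne ?_
  rw [hp s (Finset.mem_powerset.2 hs), hp s' (Finset.mem_powerset.2 hs'), hH s hs s' hs' hss']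

theorem exists_ramsey_number_strictMono (W : Type*) [LinearOrder W] [Finite W] (K : ℕ → Type*)
    [∀ k, Finite (K k)] :
    ∃ p : ℕ, ∀ c : (k : ℕ) → (Fin k → Fin p) → K k, ∃ e : W → Fin p, StrictMono e ∧
      ∀ (k : ℕ) (u u' : Fin k → W), StrictMono u → StrictMono u' →
        c k (e ∘ u) = c k (e ∘ u') := by
  have := Fintype.ofFinite W
  obtain ⟨p, hp⟩ := exists_ramsey_number
    (Set ((k : Fin (Fintype.card W + 1)) × K k)) (Fintype.card W)
  refine ⟨p, fun c => ?_⟩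
  -- A finite set has at most one increasing enumeration `s`, so its colour encodes `c k s`.
  obtain ⟨H, hHp, hcard, hH⟩ := hp fun S => {x | ∃ s : Fin x.1 → Fin p,
    StrictMono s ∧ Set.range (fun i => (s i : ℕ)) = S ∧ c x.1 s = x.2}
  let e₀ : W ↪o ℕ :=
    (Fintype.orderIsoFinOfCardEq W rfl).symm.toOrderEmbedding.trans (H.orderEmbOfFin hcard)
  have he₀ (w : W) : e₀ w ∈ H := H.orderEmbOfFin_mem hcard _
  let e : W → Fin p := fun w => ⟨e₀ w, Finset.mem_range.1 (hHp (he₀ w))⟩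
  have he : StrictMono e := e₀.strictMono
  refine ⟨e, he, fun k u u' hu hu' => ?_⟩
  have hk : k < Fintype.card W + 1 := by
    simpa [Nat.lt_succ_iff] using Fintype.card_le_of_injective u hu.injective
  let image (u : Fin k → W) : Finset ℕ := Finset.univ.image (e₀ ∘ u)
  have image_subset (u : Fin k → W) : image u ⊆ H :=
    Finset.image_subset_iff.2 fun i _ => he₀ (u i)
  have card_image {u : Fin k → W} (hu : StrictMono u) : (image u).card = k := by
    simp [image, Finset.card_image_of_injective _ (e₀.injective.comp hu.injective)]
  have range_image (u : Fin k → W) : Set.range (fun i => (e (u i) : ℕ)) = image u := by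
    simp only [image, Finset.coe_image, Finset.coe_univ, Set.image_univ]
    rfl
  have hcolour := hH _ (image_subset u) _ (image_subset u')
    ((card_image hu).trans (card_image hu').symm)
  obtain ⟨s, hs, hrange, hcs⟩ := (Set.ext_iff.1 hcolour ⟨⟨k, hk⟩, c k (e ∘ u)⟩).1
    ⟨e ∘ u, he.comp hu, range_image u, rfl⟩
  have hval : (fun i => (s i : ℕ)) = fun i => (e (u' i) : ℕ) :=
    (StrictMono.range_inj (Fin.val_strictMono.comp hs)
      (Fin.val_strictMono.comp (he.comp hu'))).1 (hrange.trans (range_image u').symm)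
  have hse : s = e ∘ u' := funext fun i => Fin.ext (congrFun hval i)
  exact hcs.symm.trans (congrArg (c k) hse)

end Ramsey

section PartiteConstruction

variable {J X Y : Type*}

/-- An embedding of a `J`-partite system of binary relations on copies `{j} × X` of `X` into
another one on copies `{j} × Y` of `Y`, part by part. Relations are preserved and reflected, but
injectivity is not demanded. -/
def IsPartiteEmbedding (R : J → J → X → X → Prop) (R' : J → J → Y → Y → Prop)
    (f : J → X → Y) : Prop :=
  ∀ j₁ j₂ x₁ x₂, R' j₁ j₂ (f j₁ x₁) (f j₂ x₂) ↔ R j₁ j₂ x₁ x₂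

/-- The relation induced on `J` by a `J`-partite system `R` through the transversal `t`. -/
def transversalPattern (R : J → J → X → X → Prop) (t : J → X) : J → J → Prop :=
  fun j j' => R j j' (t j) (t j')

theorem IsPartiteEmbedding.transversalPattern_eq {R : J → J → X → X → Prop}
    {R' : J → J → Y → Y → Prop} {f : J → X → Y} (hf : IsPartiteEmbedding R R' f) (t : J → X) :
    transversalPattern R' (fun j => f j (t j)) = transversalPattern R t := by
  ext j j'
  exact hf j j' (t j) (t j')

theorem exists_partite_ramsey_of_pattern [Finite J] [Finite X] (R : J → J → X → X → Prop)
    (A : J → J → Prop) (K : Type*) [Finite K] :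
    ∃ (d : Type) (_ : Finite d) (R' : J → J → (d → X) → (d → X) → Prop),
      ∀ χ : (J → d → X) → K, ∃ f : J → X → d → X, IsPartiteEmbedding R R' f ∧
        ∀ t t' : J → X, transversalPattern R t = A → transversalPattern R t' = A →
          χ (fun j => f j (t j)) = χ (fun j => f j (t' j)) := by
  obtain ⟨d, hd, hline⟩ :=
    Combinatorics.Line.exists_mono_in_high_dimension {t : J → X // transversalPattern R t = A} K
  -- Two words are related as prescribed by `A`, unless some coordinate deviates from `A`. On a
  -- combinatorial line whose letters have pattern `A`, only the moving coordinates can deviate.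
  refine ⟨d, inferInstance,
    fun j j' g g' => (A j j' ↔ ∀ i, (R j j' (g i) (g' i) ↔ A j j')), fun χ => ?_⟩
  obtain ⟨l, k, hk⟩ := hline fun w => χ fun j i => (w i).1 j
  obtain ⟨i₀, hi₀⟩ := l.proper
  refine ⟨fun j x i => ((l.idxFun i).map fun t => t.1 j).getD x, fun j j' x x' => ?_, ?_⟩
  · have hdev : (∀ i, (R j j' (((l.idxFun i).map fun t => t.1 j).getD x)
        (((l.idxFun i).map fun t => t.1 j').getD x') ↔ A j j')) ↔ (R j j' x x' ↔ A j j') := by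
      refine ⟨fun h => by simpa [hi₀] using h i₀, fun h i => ?_⟩
      rcases l.idxFun i with _ | t
      · exact h
      · exact iff_of_eq (congrFun₂ t.2 j j')
    beta_reduce
    rw [hdev]
    tauto
  · have hmono (t : J → X) (ht : transversalPattern R t = A) :
        χ (fun j i => ((l.idxFun i).map fun t => t.1 j).getD (t j)) = k := by
      rw [← hk ⟨t, ht⟩]
      refine congrArg χ (funext₂ fun j i => ?_)
      change _ = ((l.idxFun i).getD ⟨t, ht⟩).1 j
      cases l.idxFun i <;> rfl
    exact fun t t' ht ht' => (hmono t ht).trans (hmono t' ht').symm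

theorem exists_partite_ramsey_of_patterns {J K : Type*} [Finite J] [Finite K] {X : Type w}
    [Finite X] (R : J → J → X → X → Prop) (P : Finset (J → J → Prop)) :
    ∃ (X' : Type w) (_ : Finite X') (R' : J → J → X' → X' → Prop),
      ∀ χ : (J → X') → K, ∃ f : J → X → X', IsPartiteEmbedding R R' f ∧
        ∀ t t' : J → X, transversalPattern R t ∈ P →
          transversalPattern R t = transversalPattern R t' →
          χ (fun j => f j (t j)) = χ (fun j => f j (t' j)) := by
  classical
  induction P using Finset.induction_on generalizing X with
  | empty => exact ⟨X, inferInstance, R, fun χ => ⟨fun _ x => x, fun _ _ _ _ => Iff.rfl, by simp⟩⟩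
  | insert A P _ ih =>
    obtain ⟨d, _, R₁, h₁⟩ := exists_partite_ramsey_of_pattern R A K
    obtain ⟨X₂, _, R₂, h₂⟩ := ih R₁
    refine ⟨X₂, inferInstance, R₂, fun χ => ?_⟩
    obtain ⟨g, hg, hgχ⟩ := h₂ χ
    obtain ⟨f, hf, hfχ⟩ := h₁ fun y => χ fun j => g j (y j)
    refine ⟨fun j x => g j (f j x), fun j j' x x' => (hg _ _ _ _).trans (hf _ _ _ _),
      fun t t' ht htt' => ?_⟩
    rcases Finset.mem_insert.1 ht with hA | hP
    · exact hfχ t t' hA (htt' ▸ hA)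
    · exact hgχ _ _ ((hf.transversalPattern_eq t).symm ▸ hP)
        (by simp only [hf.transversalPattern_eq, htt'])

theorem exists_partite_ramsey {J K : Type*} [Finite J] [Finite K] {X : Type w} [Finite X]
    (R : J → J → X → X → Prop) :
    ∃ (X' : Type w) (_ : Finite X') (R' : J → J → X' → X' → Prop),
      ∀ χ : (J → X') → K, ∃ f : J → X → X', IsPartiteEmbedding R R' f ∧
        ∀ t t' : J → X, transversalPattern R t = transversalPattern R t' →
          χ (fun j => f j (t j)) = χ (fun j => f j (t' j)) := by
  have := Fintype.ofFinite (J → J → Prop)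
  simpa using exists_partite_ramsey_of_patterns (K := K) R Finset.univ

end PartiteConstruction

section OrderedDigraph

/-- The relation on `Option W` extending `R`, with `none` as an isolated point. -/
def optionRel {W : Type*} (R : W → W → Prop) : Option W → Option W → Prop
  | some x, some y => R x y
  | _, _ => False

theorem optionRel_extend_iff {ι J W : Type*} {R : W → W → Prop} {s : ι → J}
    (hs : Function.Injective s) {u u' : ι → W} (h : ∀ i i', R (u i) (u i') ↔ R (u' i) (u' i'))
    (j j' : J) :
    optionRel R (Function.extend s (some ∘ u) (fun _ => none) j)
        (Function.extend s (some ∘ u) (fun _ => none) j') ↔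
      optionRel R (Function.extend s (some ∘ u') (fun _ => none) j)
        (Function.extend s (some ∘ u') (fun _ => none) j') := by
  by_cases hj : ∃ i, s i = j <;> by_cases hj' : ∃ i, s i = j'
  · obtain ⟨i, rfl⟩ := hj
    obtain ⟨i', rfl⟩ := hj'
    simp only [hs.extend_apply]
    exact h i i'
  all_goals simp [Function.extend_apply', *, optionRel]

theorem exists_partite_ramsey_tuple (p : ℕ) {W : Type w} {K : Type*} [Finite W] [Finite K]
    (R : W → W → Prop) :
    ∃ (X : Type w) (_ : Finite X) (R' : Fin p → Fin p → X → X → Prop),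
      ∀ χ : (k : ℕ) → (Fin k → Fin p × X) → K, ∃ f : Fin p → W → X,
        IsPartiteEmbedding (fun _ _ => R) R' f ∧
        ∀ (k : ℕ) (s : Fin k → Fin p) (u u' : Fin k → W), Function.Injective s →
          (∀ i i', R (u i) (u i') ↔ R (u' i) (u' i')) →
          χ k (fun i => (s i, f (s i) (u i))) = χ k (fun i => (s i, f (s i) (u' i))) := by
  obtain ⟨X, hX, R', hR'⟩ := exists_partite_ramsey (J := Fin p)
    (K := (k : Fin (p + 1)) → (Fin k → Fin p) → K) fun _ _ => optionRel R
  refine ⟨X, hX, R', fun χ => ?_⟩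
  obtain ⟨f, hf, hχ⟩ := hR' fun y k s => χ k fun i => (s i, y (s i))
  refine ⟨fun j x => f j (some x), fun j j' x x' => hf j j' _ _, fun k s u u' hs huu' => ?_⟩
  have hk : k < p + 1 := by
    simpa [Nat.lt_succ_iff] using Fintype.card_le_of_injective s hs
  -- The isolated point `none` pads a tuple that meets only some of the parts to a transversal.
  have hcolour := hχ (Function.extend s (some ∘ u) fun _ => none)
    (Function.extend s (some ∘ u') fun _ => none)
    (funext₂ fun j j' => propext (optionRel_extend_iff hs huu' j j'))
  simpa only [hs.extend_apply, Function.comp_apply] using congrFun₂ hcolour ⟨k, hk⟩ s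

theorem exists_ordered_digraph_ramsey {W : Type w} {K : Type*} [LinearOrder W] [Finite W] [Finite K]
    (R : W → W → Prop) :
    ∃ (Y : Type w) (_ : Finite Y) (R' : Y → Y → Prop),
      ∀ χ : (k : ℕ) → (Fin k → Y) → K, ∃ E : W → Y, (∀ x y, R' (E x) (E y) ↔ R x y) ∧
        ∀ (k : ℕ) (u u' : Fin k → W), StrictMono u → StrictMono u' →
          (∀ i i', R (u i) (u i') ↔ R (u' i) (u' i')) → χ k (E ∘ u) = χ k (E ∘ u') := by
  obtain ⟨p, hp⟩ := exists_ramsey_number_strictMono W fun k => (Fin k → W) → K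
  obtain ⟨X, _, R', hR'⟩ := exists_partite_ramsey_tuple (K := K) p R
  refine ⟨Fin p × X, inferInstance, fun y y' => R' y.1 y'.1 y.2 y'.2, fun χ => ?_⟩
  obtain ⟨f, hf, hpattern⟩ := hR' χ
  obtain ⟨e, he, hposition⟩ := hp fun k s w => χ k fun i => (s i, f (s i) (w i))
  refine ⟨fun w => (e w, f (e w) w), fun x y => hf _ _ _ _, fun k u u' hu hu' huu' => ?_⟩
  calc χ k (fun i => (e (u i), f (e (u i)) (u i)))
      = χ k (fun i => (e (u' i), f (e (u' i)) (u i))) := congrFun (hposition k u u' hu hu') u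
    _ = χ k (fun i => (e (u' i), f (e (u' i)) (u' i))) :=
        hpattern k (e ∘ u') u u' (he.comp hu').injective huu'

theorem exists_strictMono_factorization {ι W W' : Type*} [Finite ι] [LinearOrder W]
    [LinearOrder W'] {q : ι → W} {q' : ι → W'} (h : ∀ i j, q i ≤ q j ↔ q' i ≤ q' j) :
    ∃ (k : ℕ) (σ : ι → Fin k) (u : Fin k → W) (u' : Fin k → W'), Function.Surjective σ ∧
      StrictMono u ∧ StrictMono u' ∧ u ∘ σ = q ∧ u' ∘ σ = q' := by
  let S := (Set.finite_range q).toFinset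
  let u := S.orderEmbOfFin rfl
  have range_u : Set.range u = Set.range q := by simp [u, S]
  choose σ hσ using fun i => range_u.ge (Set.mem_range_self i)
  choose τ hτ using fun x => range_u.le (Set.mem_range_self x)
  have lt_iff (i j : ι) : q i < q j ↔ q' i < q' j := by simp only [← not_le, h]
  refine ⟨S.card, σ, u, q' ∘ τ, fun x => ⟨τ x, u.injective ((hσ _).trans (hτ x))⟩,
    u.strictMono, fun x y hxy => ?_, funext hσ, funext fun i => ?_⟩
  · exact (lt_iff _ _).1 (by simpa only [hτ] using u.strictMono hxy)
  · have hq : q (τ (σ i)) = q i := (hτ _).trans (hσ i)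
    exact le_antisymm ((h _ _).1 hq.le) ((h _ _).1 hq.ge)

end OrderedDigraph

section Indiscernible

/-- The family of tuples `c` is indiscernible when indexed by the linearly ordered digraph `(W, R)`:
index tuples with the same quantifier-free type in the language `{≤, R}` realize the same
formulas. -/
def IsOrderedDigraphIndiscernible (L : FirstOrder.Language.{u, v}) {M W γ : Type*} [L.Structure M]
    [LinearOrder W] (R : W → W → Prop) (c : W → γ → M) : Prop :=
  ∀ (k : ℕ) (q q' : Fin k → W), (∀ i j, q i ≤ q j ↔ q' i ≤ q' j) →
    (∀ i j, R (q i) (q j) ↔ R (q' i) (q' j)) → ∀ ψ : L.Formula (Fin k × γ),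
      ψ.Realize (fun v => c (q v.1) v.2) ↔ ψ.Realize (fun v => c (q' v.1) v.2)

theorem IsOrderedDigraphIndiscernible.of_strictMono {L : FirstOrder.Language.{u, v}}
    {M W γ : Type*} [L.Structure M] [LinearOrder W] {R : W → W → Prop} {c : W → γ → M}
    (h : ∀ (k : ℕ) (u u' : Fin k → W), StrictMono u → StrictMono u' →
      (∀ i j, R (u i) (u j) ↔ R (u' i) (u' j)) → ∀ ψ : L.Formula (Fin k × γ),
        ψ.Realize (fun v => c (u v.1) v.2) ↔ ψ.Realize (fun v => c (u' v.1) v.2)) :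
    IsOrderedDigraphIndiscernible L R c := by
  intro k q q' hle hR ψ
  obtain ⟨l, σ, u, u', hσ, hu, hu', rfl, rfl⟩ := exists_strictMono_factorization hle
  simpa only [Formula.realize_relabel, Function.comp_def, Prod.map, id_eq] using
    h l u u' hu hu' (hσ.forall₂.2 hR) (ψ.relabel (Prod.map σ id))

variable {L : FirstOrder.Language.{u, v}} {N α β W : Type*} [L.Structure N]
  {φ : L.Formula (α ⊕ β)} {a : ℕ → α → N} {b : Set ℕ → β → N}

theorem exists_realize_iff_of_countable
    (hφ : ∀ i S, φ.Realize (Sum.elim (a i) (b S)) ↔ i ∈ S) {Y : Type*} [Countable Y]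
    (R : Y → Y → Prop) :
    ∃ c : Y → α ⊕ β → N,
      ∀ x y, φ.Realize (Sum.elim (c x ∘ Sum.inl) (c y ∘ Sum.inr)) ↔ R x y := by
  obtain ⟨g, hg⟩ := exists_injective_nat Y
  refine ⟨fun y => Sum.elim (a (g y)) (b (g '' {x | R x y})), fun x y => ?_⟩
  simp only [Sum.elim_comp_inl, Sum.elim_comp_inr, hφ, hg.mem_set_image, Set.mem_ofPred_eq]

theorem exists_finite_approximation [LinearOrder W]
    (hφ : ∀ i S, φ.Realize (Sum.elim (a i) (b S)) ↔ i ∈ S) (R : W → W → Prop) (W₀ : Finset W)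
    (D : Finset ((k : ℕ) × L.Formula (Fin k × (α ⊕ β)))) :
    ∃ c : W → α ⊕ β → N,
      (∀ x ∈ W₀, ∀ y ∈ W₀,
        (φ.Realize (Sum.elim (c x ∘ Sum.inl) (c y ∘ Sum.inr)) ↔ R x y)) ∧
      ∀ (k : ℕ) (ψ : L.Formula (Fin k × (α ⊕ β))), ⟨k, ψ⟩ ∈ D →
        ∀ u u' : Fin k → W, (∀ i, u i ∈ W₀) → (∀ i, u' i ∈ W₀) → StrictMono u → StrictMono u' →
          (∀ i j, R (u i) (u j) ↔ R (u' i) (u' j)) →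
          (ψ.Realize (fun v => c (u v.1) v.2) ↔ ψ.Realize (fun v => c (u' v.1) v.2)) := by
  obtain ⟨Y, _, R', hY⟩ := exists_ordered_digraph_ramsey (K := Set D) fun x y : W₀ => R x y
  obtain ⟨c, hc⟩ := exists_realize_iff_of_countable hφ R'
  obtain ⟨E, hE, hχ⟩ := hY fun k y =>
    {d | ∃ ψ, d.1 = ⟨k, ψ⟩ ∧ ψ.Realize (fun v => c (y v.1) v.2)}
  let c' : W → α ⊕ β → N := Function.extend Subtype.val (c ∘ E) fun _ => Sum.elim (a 0) (b ∅)
  have hc' (w : W₀) : c' w = c (E w) := Subtype.val_injective.extend_apply _ _ w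
  refine ⟨c', fun x hx y hy => ?_, fun k ψ hψ u u' huW hu'W hu hu' huu' => ?_⟩
  · lift x to W₀ using hx
    lift y to W₀ using hy
    rw [hc', hc', hc, hE]
  · lift u to Fin k → W₀ using huW
    lift u' to Fin k → W₀ using hu'W
    simp only [hc']
    simpa using Set.ext_iff.1 (hχ k u u' hu hu' huu') ⟨⟨k, ψ⟩, hψ⟩

end Indiscernible

theorem exists_ultrapower_model {L : FirstOrder.Language.{u, v}} {T : L.Theory} {I : Type w}
    (N : FirstOrder.Language.Theory.ModelType.{u, v, x} T) (U : Ultrafilter I) :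
    ∃ (M : FirstOrder.Language.Theory.ModelType.{u, v, max w x} T) (lim : (I → N) → M),
      ∀ {δ : Type y} (ψ : L.Formula δ) (x : δ → I → N),
        ψ.Realize (lim ∘ x) ↔ ∀ᶠ i in U, ψ.Realize fun v => x v i := by
  let P := (U : Filter I).Product fun _ => (N : Type _)
  have hP : P ⊨ T := ⟨fun θ hθ =>
    (Ultraproduct.sentence_realize θ).2 <| .of_forall fun _ => N.is_model.realize_of_mem θ hθ⟩
  exact ⟨Theory.ModelType.of T P, fun x => (x : P), Ultraproduct.realize_formula_cast⟩

theorem exists_LStar_indiscernible_of_IP_general {L : FirstOrder.Language.{u, v}} (T : L.Theory)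
    {α : Type x} {β : Type y} (φ : L.Formula (α ⊕ β)) (hφ : FormulaHasIP T φ) {W : Type w}
    [LinearOrder W] (R : W → W → Prop) :
    ∃ (M : FirstOrder.Language.Theory.ModelType.{u, v, max u v w x y} T) (c : W → α ⊕ β → M),
      (∀ i j, φ.Realize (Sum.elim (c i ∘ Sum.inl) (c j ∘ Sum.inr)) ↔ R i j) ∧
        IsOrderedDigraphIndiscernible L R c := by
  classical
  obtain ⟨N, a, b, hab⟩ := hφ
  choose c hedge hind using fun d : Finset W × Finset ((k : ℕ) × L.Formula (Fin k × (α ⊕ β))) =>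
    exists_finite_approximation hab R d.1 d.2
  let U := Ultrafilter.of (Filter.atTop :
    Filter (Finset W × Finset ((k : ℕ) × L.Formula (Fin k × (α ⊕ β)))))
  have eventually_ge (W₀ : Finset W) (D : Finset ((k : ℕ) × L.Formula (Fin k × (α ⊕ β)))) :
      ∀ᶠ d in (U : Filter (Finset W × Finset _)), W₀ ⊆ d.1 ∧ D ⊆ d.2 :=
    Ultrafilter.of_le _ (Filter.eventually_ge_atTop (W₀, D))
  obtain ⟨M, lim, hlim⟩ := exists_ultrapower_model N U
  refine ⟨M, fun w v => lim fun d => c d w v, fun i j => ?_, .of_strictMono ?_⟩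
  · let edge (v : α ⊕ β) d := Sum.elim (c d i ∘ Sum.inl) (c d j ∘ Sum.inr) v
    have hedge_ij := (eventually_ge {i, j} ∅).mono fun d hd =>
      hedge d i (hd.1 (by simp)) j (hd.1 (by simp))
    calc φ.Realize (Sum.elim (fun v => lim fun d => c d i (.inl v)) fun v =>
          lim fun d => c d j (.inr v))
        ↔ φ.Realize (lim ∘ edge) := by rw [← Sum.elim_comp_inl_inr (lim ∘ edge)]; rfl
      _ ↔ R i j := (hlim φ edge).trans <|
        (Filter.eventually_congr hedge_ij).trans Filter.eventually_const
  · intro k u u' hu hu' huu' ψ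
    refine (hlim ψ fun v d => c d (u v.1) v.2).trans
      (.trans (Filter.eventually_congr ?_) (hlim ψ fun v d => c d (u' v.1) v.2).symm)
    filter_upwards [eventually_ge (Finset.univ.image u ∪ Finset.univ.image u') {⟨k, ψ⟩}]
      with d ⟨hW, hD⟩
    exact hind d k ψ (hD (Finset.mem_singleton_self _)) u u' (fun i => hW (by simp))
      (fun i => hW (by simp)) hu hu' huu'

section Bipartite

/-- The ordered bipartite graph `R` as a digraph on the lexicographic sum `A ⊕ₗ B`, with all edges
directed from `A` to `B`. -/
def bipartiteRel {A B : Type*} (R : A → B → Prop) (x y : A ⊕ₗ B) : Prop :=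
  match ofLex x, ofLex y with
  | .inl i, .inr j => R i j
  | _, _ => False

theorem SamePairType.toLex_le_iff {R : ℚ → ℚ → Prop} {x y x' y' : GStarIdx}
    (h : SamePairType R x y x' y') : toLex x ≤ toLex y ↔ toLex x' ≤ toLex y' := by
  rcases x with _ | _ <;> rcases y with _ | _ <;> rcases x' with _ | _ <;> rcases y' with _ | _ <;>
    simp_all [SamePairType]

theorem SamePairType.bipartiteRel_iff {R : ℚ → ℚ → Prop} {x y x' y' : GStarIdx}
    (h : SamePairType R x y x' y') :
    bipartiteRel R (toLex x) (toLex y) ↔ bipartiteRel R (toLex x') (toLex y') := by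
  rcases x with _ | _ <;> rcases y with _ | _ <;> rcases x' with _ | _ <;> rcases y' with _ | _ <;>
    simp_all [SamePairType, bipartiteRel]

theorem pickSide_toLex {M : Type*} {m n : ℕ} (c : ℚ ⊕ₗ ℚ → Fin m ⊕ Fin n → M) (q : ℚ) (s : Bool)
    (v : MixVar m n s) :
    pickSide (c (toLex (.inl q)) ∘ Sum.inl) (c (toLex (.inr q)) ∘ Sum.inr) s v =
      c (toLex (bif s then .inl q else .inr q)) (pickSide Sum.inl Sum.inr s v) := by
  cases s <;> rfl

theorem IsOrderedDigraphIndiscernible.isLStarIndiscernible {L : FirstOrder.Language.{u, v}}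
    {M : Type (max u v)} [L.Structure M] {R : ℚ → ℚ → Prop} {m n : ℕ}
    {c : ℚ ⊕ₗ ℚ → Fin m ⊕ Fin n → M} (hc : IsOrderedDigraphIndiscernible L (bipartiteRel R) c) :
    IsLStarIndiscernible (L := L) R (fun i => c (toLex (.inl i)) ∘ Sum.inl)
      (fun j => c (toLex (.inr j)) ∘ Sum.inr) := by
  intro k s q q' hqq' ψ
  have hmkIdx := hc k (fun i => toLex (mkIdx s q i)) (fun i => toLex (mkIdx s q' i))
    (fun i j => (hqq' i j).toLex_le_iff) (fun i j => (hqq' i j).bipartiteRel_iff)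
    (ψ.relabel fun v => (v.1, pickSide Sum.inl Sum.inr (s v.1) v.2))
  rw [Formula.realize_relabel, Formula.realize_relabel] at hmkIdx
  simp only [pickSide_toLex]
  exact hmkIdx

end Bipartite

/-- Lemma 1: If `φ(x̄; ȳ)` has the independence property, then there is a family
`(āᵢ, b̄ᵢ : i ∈ ℚ)` in some model `M` of `T`, indexed by the random ordered bipartite graph
`G*` (with edge relation `R`), such that `M ⊨ φ(āᵢ; b̄ⱼ)` iff `R i j`, and the family is
`L*`-indiscernible. -/
theorem exists_LStar_indiscernible_of_IP {L : FirstOrder.Language.{u, v}} (T : L.Theory)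
    (hT : T.IsComplete) {m n : ℕ} (φ : L.Formula (Fin m ⊕ Fin n)) (hφ : FormulaHasIP T φ)
    (R : ℚ → ℚ → Prop) (hR : IsRandomOBG R) :
    ∃ (M : FirstOrder.Language.Theory.ModelType.{u, v, max u v} T)
      (a : ℚ → Fin m → M) (b : ℚ → Fin n → M),
      (∀ i j : ℚ, φ.Realize (Sum.elim (a i) (b j)) ↔ R i j) ∧
        IsLStarIndiscernible (L := L) R a b := by
  obtain ⟨M, c, hedge, hind⟩ := exists_LStar_indiscernible_of_IP_general T φ hφ (bipartiteRel R)
  exact ⟨M, _, _, fun i j => hedge (toLex (.inl i)) (toLex (.inr j)), hind.isLStarIndiscernible⟩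
end
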